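/- arXiv:2008.09143 — 4 statements merged into one kernel-verified Lean document; each statement's English description precedes it below -/
import Mathlib

section
/- Let 0 < c < 1 and let p : ℕ → [0,1] satisfy p(n)·n → c as n → ∞. Let Z_n be the number of cycles of G(n,p(n)) that lie in connected components which are neither trees nor unicyclic graphs. Then lim_{n→∞} E[Z_n] = 0. -/
/-!
The proof is a first moment computation. Let `H` be a cycle in a component `K` that is neither a
tree nor unicyclic, and let `v` be a vertex of `H`. Let `f` send each vertex of `H` to its
successor along `H`, and each other vertex of `K` to a neighbour closer to `v`. The edges `u — f u`
number at most `|K|`, whereas `K` is connected with more than `|K|` edges, so some edge `a — b` of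
`K` is not of this form (`exists_extra_edge`). Starting from `H`, climb the forest given by `f` up
to `a`, cross to `b`, and, unless `b` has been visited, descend along `f` until the first visited
vertex. After rotating `H` this is a path in `G` on distinct vertices `y 0, …, y m` together with
two further edges: `y j — y 0`, which closes the initial segment to `H`, and a chord `y m — y i`
(`exists_backEdge`).

Thus each bad cycle is the initial cycle of a configuration with `m + 1` vertices and `m + 2`
edges, and is determined by it (`badCycleCount_le`). There are at most `(m + 1)² n ^ (m + 1)`
configurations for each `m`, and each is present with probability at most `p ^ (m + 2)`
(`sum_gWeight_le`). So the expectation is at most `∑ (m + 1)² (n p) ^ (m + 1) p`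
(`gExp_badCycleCount_le`). When `n p ≤ r < 1` this is at most a convergent series times `r / n`,
which tends to `0`.
-/

open Filter Topology FirstOrder

/-- Probability weight of a given graph outcome in `G(n,p)`. -/
noncomputable def gWeight (n : ℕ) (p : ℝ) (G : SimpleGraph (Fin n)) : ℝ :=
  p ^ G.edgeSet.ncard * (1 - p) ^ (n.choose 2 - G.edgeSet.ncard)

open scoped Classical in
/-- Probability of the event `A` under the binomial random graph `G(n,p)`. -/
noncomputable def gProb (n : ℕ) (p : ℝ) (A : SimpleGraph (Fin n) → Prop) : ℝ :=
  ∑ᶠ G : SimpleGraph (Fin n), if A G then gWeight n p G else 0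

/-- Expectation of `f` under the binomial random graph `G(n,p)`. -/
noncomputable def gExp (n : ℕ) (p : ℝ) (f : SimpleGraph (Fin n) → ℝ) : ℝ :=
  ∑ᶠ G : SimpleGraph (Fin n), gWeight n p G * f G

/-- A graph is unicyclic if it is connected and has as many edges as vertices
(equivalently, it is connected and contains exactly one cycle). -/
def IsUnicyclic {V : Type*} (G : SimpleGraph V) : Prop :=
  G.Connected ∧ G.edgeSet.ncard = Nat.card V

/-- The vertex set of the fragment of `G`: the union of the supports of the unicyclic
connected components of `G`. -/
def fragSet {V : Type*} (G : SimpleGraph V) : Set V :=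
  {v | IsUnicyclic (G.induce (G.connectedComponentMk v).supp)}

/-- The number of cycles of `G` (subgraphs isomorphic to a cycle graph) lying in connected
components that are neither trees nor unicyclic. -/
noncomputable def badCycleCount {n : ℕ} (G : SimpleGraph (Fin n)) : ℕ :=
  Set.ncard {H : G.Subgraph |
    (∃ j, 3 ≤ j ∧ Nonempty (H.coe ≃g SimpleGraph.cycleGraph j)) ∧
    ∃ v ∈ H.verts,
      ¬((G.induce (G.connectedComponentMk v).supp).IsTree ∨
        IsUnicyclic (G.induce (G.connectedComponentMk v).supp))}

/-! ### A path and a back edge through every bad cycle -/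

/-- `y 0, …, y m` are distinct vertices forming a path of `G` whose initial segment
`y 0, …, y j`, closed up by the edge `y j — y 0`, is the cycle `H`. Values of `y` beyond `m`
carry no information. -/
structure CyclePath {V : Type*} (G : SimpleGraph V) (H : G.Subgraph) (j m : ℕ) (y : ℕ → V) :
    Prop where
  inj : ∀ s ≤ m, ∀ t ≤ m, y s = y t → s = t
  adj : ∀ t < m, G.Adj (y t) (y (t + 1))
  two_le : 2 ≤ j
  le : j ≤ m
  verts : ∀ a, a ∈ H.verts ↔ ∃ t ≤ j, a = y t
  cyc : ∀ a b, H.Adj a b ↔ (∃ t < j, s(a, b) = s(y t, y (t + 1))) ∨ s(a, b) = s(y j, y 0)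

/-- The sequence `y` with everything after position `m` replaced by `b`. -/
def seqExt {V : Type*} (y : ℕ → V) (m : ℕ) (b : V) (t : ℕ) : V := if t ≤ m then y t else b

lemma seqExt_of_le {V : Type*} {y : ℕ → V} {m : ℕ} {b : V} {t : ℕ} (h : t ≤ m) :
    seqExt y m b t = y t := if_pos h

lemma seqExt_succ {V : Type*} {y : ℕ → V} {m : ℕ} {b : V} :
    seqExt y m b (m + 1) = b := if_neg (by omega)

lemma CyclePath.extend {V : Type*} {G : SimpleGraph V} {H : G.Subgraph} {j m : ℕ} {y : ℕ → V}
    (h : CyclePath G H j m y) {b : V} (hb : G.Adj (y m) b) (hne : ∀ t ≤ m, y t ≠ b) :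
    CyclePath G H j (m + 1) (seqExt y m b) := by
  have hjm := h.le
  refine ⟨?_, ?_, h.two_le, by omega, ?_, ?_⟩
  · intro s hs t ht hst
    rcases Nat.lt_or_ge m s with h1 | h1 <;> rcases Nat.lt_or_ge m t with h2 | h2
    · omega
    · obtain rfl : s = m + 1 := by omega
      rw [seqExt_succ, seqExt_of_le h2] at hst
      exact absurd hst.symm (hne t h2)
    · obtain rfl : t = m + 1 := by omega
      rw [seqExt_succ, seqExt_of_le h1] at hst
      exact absurd hst (hne s h1)
    · rw [seqExt_of_le h1, seqExt_of_le h2] at hst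
      exact h.inj s h1 t h2 hst
  · intro t ht
    rcases Nat.lt_or_ge t m with h1 | h1
    · rw [seqExt_of_le (by omega), seqExt_of_le (by omega)]
      exact h.adj t h1
    · obtain rfl : t = m := by omega
      rw [seqExt_of_le le_rfl, seqExt_succ]
      exact hb
  · intro a
    rw [h.verts]
    refine exists_congr fun t => and_congr_right fun ht => ?_
    rw [seqExt_of_le (by omega)]
  · intro a b
    rw [h.cyc, seqExt_of_le hjm, seqExt_of_le (Nat.zero_le _)]
    refine or_congr_left (exists_congr fun t => and_congr_right fun ht => ?_)
    rw [seqExt_of_le (by omega), seqExt_of_le (by omega)]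

/-- A cycle subgraph has a cyclic enumeration of its vertices. -/
lemma exists_cyclic_enum {V : Type*} {G : SimpleGraph V} {H : G.Subgraph}
    (hH : ∃ j, 3 ≤ j ∧ Nonempty (H.coe ≃g SimpleGraph.cycleGraph j)) :
    ∃ k, ∃ x : Fin (k + 3) → V, Function.Injective x ∧ (∀ a, a ∈ H.verts ↔ ∃ u, a = x u) ∧
      ∀ a b, H.Adj a b ↔ ∃ u, s(a, b) = s(x u, x (u + 1)) := by
  obtain ⟨j, hj, ⟨φ⟩⟩ := hH
  obtain ⟨k, rfl⟩ := Nat.exists_eq_add_of_le' hj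
  have key : ∀ u v : Fin (k + 3), H.Adj (φ.symm u) (φ.symm v) ↔ v = u + 1 ∨ u = v + 1 := by
    intro u v
    have := φ.symm.map_adj_iff (v := u) (w := v)
    rw [SimpleGraph.Subgraph.coe_adj] at this
    rw [this, SimpleGraph.cycleGraph_adj, sub_eq_iff_eq_add', sub_eq_iff_eq_add', or_comm]
  have hv : ∀ a, a ∈ H.verts ↔ ∃ u, a = (φ.symm u : V) := by
    intro a
    constructor
    · intro ha
      exact ⟨φ ⟨a, ha⟩, by simp⟩
    · rintro ⟨u, rfl⟩
      exact (φ.symm u).2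
  refine ⟨k, fun u => (φ.symm u : V), ?_, hv, ?_⟩
  · exact Subtype.val_injective.comp φ.symm.injective
  · intro a b
    constructor
    · intro hab
      obtain ⟨u, rfl⟩ := (hv a).1 hab.fst_mem
      obtain ⟨v, rfl⟩ := (hv b).1 hab.snd_mem
      rcases (key u v).1 hab with rfl | rfl
      · exact ⟨u, rfl⟩
      · exact ⟨v, Sym2.eq_swap⟩
    · rintro ⟨u, hu⟩
      have h1 : H.Adj (φ.symm u) (φ.symm (u + 1)) := (key _ _).2 (Or.inl rfl)
      rcases Sym2.eq_iff.1 hu with ⟨rfl, rfl⟩ | ⟨rfl, rfl⟩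
      · exact h1
      · exact h1.symm

open Fin.NatCast Fin.CommRing in
/-- Rotating the enumeration, the cycle can be made to end at any prescribed vertex `x r`. -/
lemma cyclePath_rotate {V : Type*} {G : SimpleGraph V} {H : G.Subgraph} {k : ℕ}
    {x : Fin (k + 3) → V} (hx : Function.Injective x) (hv : ∀ a, a ∈ H.verts ↔ ∃ u, a = x u)
    (he : ∀ a b, H.Adj a b ↔ ∃ u, s(a, b) = s(x u, x (u + 1))) (r : Fin (k + 3)) :
    ∃ y, CyclePath G H (k + 2) (k + 2) y ∧ y (k + 2) = x r := by
  have hlast : ((k + 2 : ℕ) : Fin (k + 3)) + 1 = 0 := by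
    have : ((k + 2 + 1 : ℕ) : Fin (k + 3)) = 0 := Fin.natCast_self _
    rw [← this]; push_cast; ring
  have hsurj : ∀ u : Fin (k + 3), ∃ t ≤ k + 2, u = r + 1 + ((t : ℕ) : Fin (k + 3)) := by
    intro u
    refine ⟨(u - (r + 1)).val, by omega, ?_⟩
    rw [Fin.cast_val_eq_self]; ring
  refine ⟨fun t => x (r + 1 + (t : Fin (k + 3))), ⟨?_, ?_, by omega, le_rfl, ?_, ?_⟩, ?_⟩
  · intro s hs t ht hst
    have h1 := congrArg Fin.val (add_left_cancel (hx hst))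
    rwa [Fin.val_natCast, Fin.val_natCast, Nat.mod_eq_of_lt (by omega),
      Nat.mod_eq_of_lt (by omega)] at h1
  · intro t ht
    refine H.adj_sub ((he _ _).2 ⟨r + 1 + (t : Fin (k + 3)), ?_⟩)
    push_cast
    rw [add_assoc (r + 1)]
  · intro a
    rw [hv]
    constructor
    · rintro ⟨u, rfl⟩
      obtain ⟨t, ht, rfl⟩ := hsurj u
      exact ⟨t, ht, rfl⟩
    · rintro ⟨t, -, rfl⟩
      exact ⟨_, rfl⟩
  · intro a b
    rw [he]
    constructor
    · rintro ⟨u, hu⟩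
      obtain ⟨t, ht, rfl⟩ := hsurj u
      rcases Nat.lt_or_ge t (k + 2) with h1 | h1
      · refine Or.inl ⟨t, h1, ?_⟩
        rw [hu]; push_cast; rw [add_assoc (r + 1)]
      · obtain rfl : t = k + 2 := by omega
        refine Or.inr ?_
        rw [hu, add_assoc (r + 1), hlast, Nat.cast_zero]
    · rintro (⟨t, ht, h⟩ | h)
      · refine ⟨r + 1 + (t : Fin (k + 3)), ?_⟩
        rw [h]; push_cast; rw [add_assoc (r + 1)]
      · refine ⟨r + 1 + ((k + 2 : ℕ) : Fin (k + 3)), ?_⟩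
        rw [h, add_assoc (r + 1), hlast, Nat.cast_zero]
  · show x (r + 1 + ((k + 2 : ℕ) : Fin (k + 3))) = x r
    rw [add_assoc, add_comm 1, hlast, add_zero]

/-- If every edge inside the component of `v` were of the form `u — f u`, the component would have
at most as many edges as vertices, hence be a tree or unicyclic. -/
lemma exists_extra_edge {V : Type*} [Finite V] {G : SimpleGraph V} {v : V}
    (hbad : ¬((G.induce (G.connectedComponentMk v).supp).IsTree ∨
        IsUnicyclic (G.induce (G.connectedComponentMk v).supp))) (f : V → V) :
    ∃ a b, G.Reachable v a ∧ G.Reachable v b ∧ G.Adj a b ∧ f a ≠ b ∧ f b ≠ a := by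
  by_contra! hcon
  set S := (G.connectedComponentMk v).supp with hS
  have hmem : ∀ u, u ∈ S → G.Reachable v u := by
    intro u hu
    rw [hS, SimpleGraph.ConnectedComponent.mem_supp_iff, SimpleGraph.ConnectedComponent.eq] at hu
    exact hu.symm
  have hconn : (G.induce S).Connected :=
    (G.connectedComponentMk v).connected_toSimpleGraph
  have h1 := hconn.card_vert_le_card_edgeSet_add_one
  have h2 : (G.induce S).edgeSet.ncard ≤ Nat.card S := by
    rw [Nat.card_coe_set_eq]
    have hsub : Sym2.map Subtype.val '' (G.induce S).edgeSet ⊆ (fun u => s(u, f u)) '' S := by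
      rintro _ ⟨e, he, rfl⟩
      induction e using Sym2.ind with
      | _ a b =>
        have hab : G.Adj a b := he
        by_cases h : f a = b
        · exact ⟨a, a.2, by simp [h]⟩
        · refine ⟨b, b.2, ?_⟩
          have := hcon a b (hmem _ a.2) (hmem _ b.2) hab h
          simp [this, Sym2.eq_swap]
    rw [← Set.ncard_image_of_injective _ (Sym2.map.injective Subtype.val_injective)]
    exact (Set.ncard_le_ncard hsub (Set.toFinite _)).trans (Set.ncard_image_le (Set.toFinite _))
  rw [Nat.card_coe_set_eq (G.induce S).edgeSet] at h1
  refine hbad ?_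
  by_cases h3 : (G.induce S).edgeSet.ncard = Nat.card S
  · exact Or.inr ⟨hconn, h3⟩
  · refine Or.inl (SimpleGraph.isTree_iff_connected_and_card.2 ⟨hconn, ?_⟩)
    rw [Nat.card_coe_set_eq (G.induce S).edgeSet]
    omega

lemma exists_adj_dist_lt {V : Type*} {G : SimpleGraph V} {v u : V} (h : G.Reachable v u)
    (hne : u ≠ v) : ∃ w, G.Adj u w ∧ G.dist v w < G.dist v u := by
  obtain ⟨p, hp⟩ := h.symm.exists_walk_length_eq_dist
  cases p with
  | nil => exact absurd rfl hne
  | cons hadj q =>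
    refine ⟨_, hadj, ?_⟩
    rw [SimpleGraph.dist_comm (u := v), SimpleGraph.dist_comm (u := v), ← hp]
    have := SimpleGraph.dist_le q
    simp only [SimpleGraph.Walk.length_cons]
    omega

/-- `y m — y i` is an edge of `G`, where `y i` is an earlier vertex of the path, and this edge is
neither the last path edge nor the closing edge `y j — y 0` of the cycle. -/
def HasBackEdge {V : Type*} (G : SimpleGraph V) (j m i : ℕ) (y : ℕ → V) : Prop :=
  i + 1 < m ∧ ¬(m = j ∧ i = 0) ∧ G.Adj (y m) (y i)

section
variable {V : Type*} {G : SimpleGraph V} {H : G.Subgraph} {v : V} {f : V → V}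

/-- Follow `f` from the far end of the path: the distance to `v` decreases, so the
earlier vertices are eventually met, and the meeting edge is a chord. -/
lemma exists_backEdge_of_pred_ne (hvH : v ∈ H.verts)
    (hf : ∀ u, u ∉ H.verts → G.Reachable v u → G.Adj u (f u) ∧ G.dist v (f u) < G.dist v u)
    (j : ℕ) : ∀ d m y, CyclePath G H j m y → j < m → G.Reachable v (y m) →
      f (y m) ≠ y (m - 1) → G.dist v (y m) ≤ d →
      ∃ m i y, CyclePath G H j m y ∧ HasBackEdge G j m i y := by
  intro d
  induction d with
  | zero =>
    intro m y hy hjm hr _ hd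
    have h0 : v = y m := hr.dist_eq_zero_iff.1 (by omega)
    obtain ⟨t, ht, h⟩ := (hy.verts v).1 hvH
    have := hy.inj t (by omega) m le_rfl (h.symm.trans h0)
    omega
  | succ d ih =>
    intro m y hy hjm hr hpred hd
    have hmem : y m ∉ H.verts := by
      intro hm
      obtain ⟨t, ht, h⟩ := (hy.verts _).1 hm
      have := hy.inj m le_rfl t (by omega) h
      omega
    obtain ⟨hadj, hlt⟩ := hf _ hmem hr
    by_cases hex : ∃ i ≤ m, y i = f (y m)
    · obtain ⟨i, hi, hyi⟩ := hex
      have h1 : i ≠ m := by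
        rintro rfl
        rw [← hyi] at hadj
        exact hadj.ne rfl
      have h2 : i ≠ m - 1 := by
        rintro rfl
        exact hpred hyi.symm
      exact ⟨m, i, y, hy, by omega, by omega, hyi ▸ hadj⟩
    · push Not at hex
      have hext := hy.extend hadj hex
      have hr' := hr.trans hadj.reachable
      refine ih (m + 1) _ hext (by omega) ?_ ?_ ?_
      · rwa [seqExt_succ]
      · rw [seqExt_succ, Nat.add_sub_cancel, seqExt_of_le le_rfl]
        have hnm : f (y m) ∉ H.verts := by
          intro hm
          obtain ⟨t, ht, h⟩ := (hy.verts _).1 hm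
          exact hex t (by omega) h.symm
        intro h
        have := (hf _ hnm hr').2
        rw [h] at this
        omega
      · rw [seqExt_succ]; omega

/-- Every vertex `a` of the component is the end of a path that first runs around the cycle and
then descends the forest `f` backwards, so that its last edge off the cycle is `f a — a`. The
distance bound on its vertices keeps them distinct when the path is extended. -/
lemma exists_cyclePath_to {j : ℕ}
    (hrot : ∀ a ∈ H.verts, ∃ y, CyclePath G H j j y ∧ y j = a)
    (hf : ∀ u, u ∉ H.verts → G.Reachable v u → G.Adj u (f u) ∧ G.dist v (f u) < G.dist v u) :
    ∀ d a, G.Reachable v a → G.dist v a ≤ d →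
      ∃ m y, CyclePath G H j m y ∧ y m = a ∧ (m = j ∨ y (m - 1) = f a) ∧
        ∀ t ≤ m, y t ∈ H.verts ∨ G.dist v (y t) ≤ G.dist v a := by
  intro d
  induction d with
  | zero =>
    intro a ha hd
    by_cases haH : a ∈ H.verts
    · obtain ⟨y, hy, rfl⟩ := hrot a haH
      exact ⟨j, y, hy, rfl, Or.inl rfl, fun t ht => Or.inl ((hy.verts _).2 ⟨t, ht, rfl⟩)⟩
    · have := (hf a haH ha).2
      omega
  | succ d ih =>
    intro a ha hd
    by_cases haH : a ∈ H.verts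
    · obtain ⟨y, hy, rfl⟩ := hrot a haH
      exact ⟨j, y, hy, rfl, Or.inl rfl, fun t ht => Or.inl ((hy.verts _).2 ⟨t, ht, rfl⟩)⟩
    · obtain ⟨hadj, hlt⟩ := hf a haH ha
      obtain ⟨m, y, hy, hm, -, hall⟩ := ih (f a) (ha.trans hadj.reachable) (by omega)
      have hne : ∀ t ≤ m, y t ≠ a := by
        rintro t ht rfl
        rcases hall t ht with h | h
        · exact haH h
        · omega
      refine ⟨m + 1, _, hy.extend (b := a) (hm ▸ hadj.symm) hne, seqExt_succ, Or.inr ?_, ?_⟩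
      · rw [Nat.add_sub_cancel, seqExt_of_le le_rfl, hm]
      · intro t ht
        rcases Nat.lt_or_ge m t with h1 | h1
        · obtain rfl : t = m + 1 := by omega
          rw [seqExt_succ]
          exact Or.inr le_rfl
        · rw [seqExt_of_le h1]
          rcases hall t h1 with h | h
          · exact Or.inl h
          · exact Or.inr (by omega)

end

/-- Around a cycle in a component that is neither a tree nor unicyclic there is a path running
once around the cycle and then on to a vertex with a further edge back to the path. -/
lemma exists_backEdge {V : Type*} [Finite V] {G : SimpleGraph V} {H : G.Subgraph}
    (hH : ∃ j, 3 ≤ j ∧ Nonempty (H.coe ≃g SimpleGraph.cycleGraph j)) {v : V} (hvH : v ∈ H.verts)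
    (hbad : ¬((G.induce (G.connectedComponentMk v).supp).IsTree ∨
        IsUnicyclic (G.induce (G.connectedComponentMk v).supp))) :
    ∃ j m i y, CyclePath G H j m y ∧ HasBackEdge G j m i y := by
  obtain ⟨k, x, hx, hv, he⟩ := exists_cyclic_enum hH
  have hrot : ∀ a ∈ H.verts, ∃ y, CyclePath G H (k + 2) (k + 2) y ∧ y (k + 2) = a := by
    intro a ha
    obtain ⟨r, rfl⟩ := (hv a).1 ha
    exact cyclePath_rotate hx hv he r
  -- `f` is the successor along the cycle, and off the cycle a neighbour closer to `v`.
  have hfex : ∀ u, ∃ w, (∀ t, u = x t → w = x (t + 1)) ∧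
      (u ∉ H.verts → G.Reachable v u → G.Adj u w ∧ G.dist v w < G.dist v u) := by
    intro u
    by_cases hu : u ∈ H.verts
    · obtain ⟨t, rfl⟩ := (hv u).1 hu
      exact ⟨x (t + 1), fun s hs => by rw [hx hs], fun h => absurd hu h⟩
    · by_cases hr : G.Reachable v u
      · obtain ⟨w, hw⟩ := exists_adj_dist_lt hr (fun h => hu (h ▸ hvH))
        exact ⟨w, fun t ht => absurd ((hv u).2 ⟨t, ht⟩) hu, fun _ _ => hw⟩
      · exact ⟨u, fun t ht => absurd ((hv u).2 ⟨t, ht⟩) hu, fun _ h => absurd h hr⟩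
  choose f hf1 hf using hfex
  obtain ⟨a, b, hra, hrb, hab, hfa, hfb⟩ := exists_extra_edge hbad f
  have hnH : ¬ H.Adj a b := by
    intro h
    obtain ⟨u, hu⟩ := (he a b).1 h
    rcases Sym2.eq_iff.1 hu with ⟨h1, h2⟩ | ⟨h1, h2⟩
    · exact hfa ((hf1 a u h1).trans h2.symm)
    · exact hfb ((hf1 b u h2).trans h1.symm)
  obtain ⟨m, y, hy, rfl, hpred, -⟩ := exists_cyclePath_to hrot hf _ a hra le_rfl
  have hjm := hy.le
  by_cases hex : ∃ i ≤ m, y i = b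
  · obtain ⟨i, hi, rfl⟩ := hex
    refine ⟨k + 2, m, i, y, hy, ?_, ?_, hab⟩
    · have h1 : i ≠ m := by
        rintro rfl
        exact hab.ne rfl
      have h2 : i ≠ m - 1 := by
        rintro rfl
        rcases hpred with rfl | h
        · refine hnH ((hy.cyc _ _).2 (Or.inl ⟨k + 1, by omega, ?_⟩))
          exact Sym2.eq_swap
        · exact hfa h.symm
      omega
    · rintro ⟨rfl, rfl⟩
      exact hnH ((hy.cyc _ _).2 (Or.inr rfl))
  · push Not at hex
    have hext := hy.extend hab hex
    obtain ⟨m', i, y', h⟩ := exists_backEdge_of_pred_ne hvH hf (k + 2) _ (m + 1) _ hext (by omega)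
      (by rwa [seqExt_succ]) (by
        rw [seqExt_succ, Nat.add_sub_cancel, seqExt_of_le le_rfl]
        exact hfb) le_rfl
    exact ⟨k + 2, m', i, y', h⟩

/-! ### The first moment bound -/

lemma gWeight_nonneg {n : ℕ} {p : ℝ} (hp : p ∈ Set.Icc (0 : ℝ) 1) (G : SimpleGraph (Fin n)) :
    0 ≤ gWeight n p G :=
  mul_nonneg (pow_nonneg hp.1 _) (pow_nonneg (sub_nonneg.2 hp.2) _)

open scoped Classical in
/-- A prescribed set `T` of edges is present in `G(n,p)` with probability at most `p ^ #T`. -/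
lemma sum_gWeight_le {n : ℕ} {p : ℝ} (hp : p ∈ Set.Icc (0 : ℝ) 1) (T : Finset (Sym2 (Fin n))) :
    ∑ G : SimpleGraph (Fin n) with (T : Set (Sym2 (Fin n))) ⊆ G.edgeSet, gWeight n p G
      ≤ p ^ T.card := by
  set E := (⊤ : SimpleGraph (Fin n)).edgeFinset with hE
  have hEc : E.card = n.choose 2 := by
    rw [hE, SimpleGraph.card_edgeFinset_top_eq_card_choose_two, Fintype.card_fin]
  have hw : ∀ G ∈ Finset.univ.filter
      (fun G : SimpleGraph (Fin n) => (T : Set (Sym2 (Fin n))) ⊆ G.edgeSet),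
      gWeight n p G = p ^ T.card *
        (p ^ (G.edgeFinset \ T).card * (1 - p) ^ ((E \ T).card - (G.edgeFinset \ T).card)) := by
    intro G hG
    have hTG : T ⊆ G.edgeFinset := by
      intro e he
      exact SimpleGraph.mem_edgeFinset.2 ((Finset.mem_filter.1 hG).2 he)
    have hGE : G.edgeFinset ⊆ E := SimpleGraph.edgeFinset_mono le_top
    have hc : G.edgeSet.ncard = G.edgeFinset.card := by
      rw [← SimpleGraph.coe_edgeFinset, Set.ncard_coe_finset]
    have h1 := Finset.card_sdiff_add_card_eq_card hTG
    have h2 := Finset.card_sdiff_add_card_eq_card (hTG.trans hGE)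
    rw [gWeight, hc, ← hEc, ← mul_assoc, ← pow_add]
    congr 2 <;> omega
  rw [Finset.sum_congr rfl hw, ← Finset.mul_sum]
  refine mul_le_of_le_one_right (pow_nonneg hp.1 _) ?_
  have hinj : Set.InjOn (fun G : SimpleGraph (Fin n) => G.edgeFinset \ T)
      (Finset.univ.filter
        (fun G : SimpleGraph (Fin n) => (T : Set (Sym2 (Fin n))) ⊆ G.edgeSet)) := by
    intro G hG G' hG' h
    have hT : ∀ G : SimpleGraph (Fin n), (T : Set (Sym2 (Fin n))) ⊆ G.edgeSet →
        (G.edgeFinset \ T) ∪ T = G.edgeFinset := by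
      intro G hG
      refine Finset.sdiff_union_of_subset fun e he => SimpleGraph.mem_edgeFinset.2 (hG he)
    simp only [Finset.coe_filter, Finset.mem_univ, true_and, Set.mem_ofPred_eq] at hG hG'
    have h' : G.edgeFinset = G'.edgeFinset := by
      rw [← hT G hG, ← hT G' hG']
      exact congrArg (· ∪ T) h
    exact SimpleGraph.edgeFinset_inj.1 h'
  rw [← Finset.sum_image (g := fun G : SimpleGraph (Fin n) => G.edgeFinset \ T)
    (f := fun t => p ^ t.card * (1 - p) ^ ((E \ T).card - t.card)) hinj]
  refine (Finset.sum_le_sum_of_subset_of_nonneg (t := (E \ T).powerset) ?_ ?_).trans_eq ?_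
  · intro t ht
    obtain ⟨G, -, rfl⟩ := Finset.mem_image.1 ht
    exact Finset.mem_powerset.2
      (Finset.sdiff_subset_sdiff (SimpleGraph.edgeFinset_mono le_top) le_rfl)
  · intro t _ _
    exact mul_nonneg (pow_nonneg hp.1 _) (pow_nonneg (sub_nonneg.2 hp.2) _)
  · rw [Finset.sum_pow_mul_eq_add_pow]
    simp

/-- The edges of the path `0 — 1 — ⋯ — m` with the two chords `j — 0` and `m — i`. -/
def chordedPath (m : ℕ) (j i : Fin (m + 1)) : Finset (Sym2 (Fin (m + 1))) :=
  insert s(Fin.last m, i) (insert s(j, 0)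
    (Finset.univ.image fun t : Fin m => s(t.castSucc, t.succ)))

lemma card_chordedPath {m : ℕ} {j i : Fin (m + 1)} (hj : 2 ≤ (j : ℕ)) (hi : (i : ℕ) + 1 < m)
    (hne : ¬(m = j ∧ (i : ℕ) = 0)) : (chordedPath m j i).card = m + 2 := by
  have hjm := j.2
  rw [chordedPath, Finset.card_insert_of_notMem, Finset.card_insert_of_notMem,
    Finset.card_image_of_injective, Finset.card_univ, Fintype.card_fin]
  · intro s t h
    simp only [Sym2.eq_iff, Fin.ext_iff, Fin.val_castSucc, Fin.val_succ] at h
    exact Fin.ext (by omega)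
  · intro h
    obtain ⟨t, -, h⟩ := Finset.mem_image.1 h
    simp only [Sym2.eq_iff, Fin.ext_iff, Fin.val_castSucc, Fin.val_succ, Fin.val_zero] at h
    omega
  · intro h
    rcases Finset.mem_insert.1 h with h | h
    · simp only [Sym2.eq_iff, Fin.ext_iff, Fin.val_last, Fin.val_zero] at h
      omega
    · obtain ⟨t, -, h⟩ := Finset.mem_image.1 h
      simp only [Sym2.eq_iff, Fin.ext_iff, Fin.val_castSucc, Fin.val_succ, Fin.val_last] at h
      omega

/-- Labelled shapes: the path length `m`, the chord parameters `(j, i)` and the placement of the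
`m + 1` path vertices in `Fin n`. -/
abbrev Shape (n : ℕ) : Type := Σ m : Fin n, (Fin (m + 1) × Fin (m + 1)) × (Fin (m + 1) → Fin n)

/-- The edge set of the placed chorded path. -/
def Shape.edges {n : ℕ} (σ : Shape n) : Finset (Sym2 (Fin n)) :=
  (chordedPath σ.1 σ.2.1.1 σ.2.1.2).image (Sym2.map σ.2.2)

/-- A shape is proper if its vertices are distinct, `0, …, j` closes up to a cycle, and both
chords are genuinely new edges. -/
def Shape.Proper {n : ℕ} (σ : Shape n) : Prop :=
  Function.Injective σ.2.2 ∧ 2 ≤ (σ.2.1.1 : ℕ) ∧ (σ.2.1.2 : ℕ) + 1 < σ.1 ∧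
    ¬((σ.1 : ℕ) = σ.2.1.1 ∧ (σ.2.1.2 : ℕ) = 0)

lemma Shape.Proper.card_edges {n : ℕ} {σ : Shape n} (h : σ.Proper) :
    σ.edges.card = σ.1 + 2 := by
  rw [Shape.edges, Finset.card_image_of_injective _ (Sym2.map.injective h.1),
    card_chordedPath h.2.1 h.2.2.1 h.2.2.2]

open scoped Classical in
/-- Every bad cycle is the cycle `0, …, j` of a proper shape all of whose edges lie in `G`, and the
shape determines the cycle. -/
lemma badCycleCount_le {n : ℕ} (G : SimpleGraph (Fin n)) :
    badCycleCount G ≤ (Finset.univ.filter fun σ : Shape n =>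
      σ.Proper ∧ (σ.edges : Set (Sym2 (Fin n))) ⊆ G.edgeSet).card := by
  set B := {H : G.Subgraph |
    (∃ j, 3 ≤ j ∧ Nonempty (H.coe ≃g SimpleGraph.cycleGraph j)) ∧
    ∃ v ∈ H.verts,
      ¬((G.induce (G.connectedComponentMk v).supp).IsTree ∨
        IsUnicyclic (G.induce (G.connectedComponentMk v).supp))} with hB
  have key : ∀ H ∈ B, ∃ σ : Shape n, σ.Proper ∧
      (σ.edges : Set (Sym2 (Fin n))) ⊆ G.edgeSet ∧
      ∃ y : ℕ → Fin n, CyclePath G H σ.2.1.1 σ.1 y ∧ σ.2.2 = fun t => y t.val := by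
    intro H hH
    obtain ⟨hc, v, hv, hbad⟩ := hH
    obtain ⟨j, m, i, y, hy, him, hne, hadj⟩ := exists_backEdge hc hv hbad
    have hjm := hy.le
    have hinj : Function.Injective fun t : Fin (m + 1) => y t := by
      intro s t h
      exact Fin.ext (hy.inj s (by omega) t (by omega) h)
    have hmn : m < n := by
      have := Fintype.card_le_of_injective _ hinj
      simpa using this
    refine ⟨⟨⟨m, hmn⟩, (⟨j, by simp only; omega⟩, ⟨i, by simp only; omega⟩), fun t => y t⟩,
      ⟨hinj, hy.two_le, him, hne⟩, ?_, y, hy, rfl⟩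
    intro e he
    obtain ⟨e', he', rfl⟩ := Finset.mem_image.1 he
    rcases Finset.mem_insert.1 he' with rfl | he'
    · exact hadj
    rcases Finset.mem_insert.1 he' with rfl | he'
    · exact H.adj_sub ((hy.cyc _ _).2 (Or.inr rfl))
    · obtain ⟨t, -, rfl⟩ := Finset.mem_image.1 he'
      exact hy.adj t t.2
  rcases B.eq_empty_or_nonempty with hB0 | ⟨H₀, hH₀⟩
  · rw [badCycleCount, ← hB, hB0, Set.ncard_empty]
    exact Nat.zero_le _
  have : Nonempty (Shape n) := ⟨(key H₀ hH₀).choose⟩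
  choose! F hF using key
  rw [badCycleCount, ← hB, ← Set.ncard_coe_finset]
  refine Set.ncard_le_ncard_of_injOn F ?_ ?_ (Finset.finite_toSet _)
  · intro H hH
    simpa using ⟨(hF H hH).1, (hF H hH).2.1⟩
  · intro H hH H' hH' h
    obtain ⟨-, -, y, hy, hσ⟩ := hF H hH
    obtain ⟨-, -, y', hy', hσ'⟩ := hF H' hH'
    rw [← h] at hy' hσ'
    have hyy : ∀ t ≤ ((F H).2.1.1 : ℕ), y t = y' t := by
      intro t ht
      have := congrFun (hσ.symm.trans hσ') ⟨t, by omega⟩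
      exact this
    refine SimpleGraph.Subgraph.ext ?_ ?_
    · ext a
      rw [hy.verts, hy'.verts]
      exact exists_congr fun t => and_congr_right fun ht => by rw [hyy t ht]
    · ext a b
      rw [hy.cyc, hy'.cyc, hyy _ le_rfl, hyy 0 (Nat.zero_le _)]
      refine or_congr_left (exists_congr fun t => and_congr_right fun ht => ?_)
      rw [hyy t (by omega), hyy (t + 1) (by omega)]

open scoped Classical in
/-- First moment bound: summing over the at most `(m + 1)² n ^ (m + 1)` shapes of each length. -/
lemma gExp_badCycleCount_le {n : ℕ} {p : ℝ} (hp : p ∈ Set.Icc (0 : ℝ) 1) :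
    gExp n p (fun G => (badCycleCount G : ℝ)) ≤
      ∑ m ∈ Finset.range n, ((m : ℝ) + 1) ^ 2 * (n : ℝ) ^ (m + 1) * p ^ (m + 2) := by
  rw [gExp, finsum_eq_sum_of_fintype]
  calc ∑ G : SimpleGraph (Fin n), gWeight n p G * (badCycleCount G : ℝ)
      ≤ ∑ G : SimpleGraph (Fin n), ∑ σ : Shape n with σ.Proper,
          if (σ.edges : Set (Sym2 (Fin n))) ⊆ G.edgeSet then gWeight n p G else 0 := by
        refine Finset.sum_le_sum fun G _ => ?_
        rw [← Finset.sum_filter, Finset.filter_filter, Finset.sum_const, nsmul_eq_mul, mul_comm]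
        exact mul_le_mul_of_nonneg_right (by exact_mod_cast badCycleCount_le G)
          (gWeight_nonneg hp G)
    _ = ∑ σ : Shape n with σ.Proper, ∑ G : SimpleGraph (Fin n),
          if (σ.edges : Set (Sym2 (Fin n))) ⊆ G.edgeSet then gWeight n p G else 0 :=
        Finset.sum_comm
    _ ≤ ∑ σ : Shape n with σ.Proper, p ^ ((σ.1 : ℕ) + 2) := by
        refine Finset.sum_le_sum fun σ hσ => ?_
        rw [← (Finset.mem_filter.1 hσ).2.card_edges, ← Finset.sum_filter]
        exact sum_gWeight_le hp _
    _ ≤ ∑ σ : Shape n, p ^ ((σ.1 : ℕ) + 2) :=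
        Finset.sum_le_sum_of_subset_of_nonneg (Finset.filter_subset _ _)
          fun _ _ _ => pow_nonneg hp.1 _
    _ = ∑ m ∈ Finset.range n, ((m : ℝ) + 1) ^ 2 * (n : ℝ) ^ (m + 1) * p ^ (m + 2) := by
        rw [Fintype.sum_sigma, Finset.sum_range]
        refine Finset.sum_congr rfl fun m _ => ?_
        dsimp only
        rw [Finset.sum_const, Finset.card_univ, nsmul_eq_mul]
        simp only [Fintype.card_prod, Fintype.card_fin, Fintype.card_fun]
        push_cast
        ring

lemma gExp_badCycleCount_nonneg {n : ℕ} {p : ℝ} (hp : p ∈ Set.Icc (0 : ℝ) 1) :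
    0 ≤ gExp n p (fun G => (badCycleCount G : ℝ)) :=
  finsum_nonneg fun G => mul_nonneg (gWeight_nonneg hp G) (Nat.cast_nonneg _)

/-! ### The limit -/

/-- For `0 < c < 1` and `p(n)·n → c`, the expected number of cycles of `G(n,p(n))` lying in
components that are neither trees nor unicyclic tends to `0`. -/
theorem tendsto_expected_bad_cycles (c : ℝ) (hc0 : 0 < c) (hc1 : c < 1)
    (p : ℕ → ℝ) (hp : ∀ n, p n ∈ Set.Icc (0 : ℝ) 1)
    (hpc : Tendsto (fun n : ℕ => p n * n) atTop (𝓝 c)) :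
    Tendsto (fun n : ℕ => gExp n (p n) (fun G => (badCycleCount G : ℝ))) atTop (𝓝 0) := by
  obtain ⟨r, hcr, hr1⟩ := exists_between hc1
  have hr0 : 0 < r := hc0.trans hcr
  have hsum : Summable fun m : ℕ => ((m : ℝ) + 1) ^ 2 * r ^ (m + 1) := by
    have h := summable_pow_mul_geometric_of_norm_lt_one (R := ℝ) 2 (r := r)
      (by rwa [Real.norm_of_nonneg hr0.le])
    simpa using (summable_nat_add_iff 1).2 h
  set C := ∑' m : ℕ, ((m : ℝ) + 1) ^ 2 * r ^ (m + 1) with hC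
  have hbound : ∀ᶠ n : ℕ in atTop,
      gExp n (p n) (fun G => (badCycleCount G : ℝ)) ≤ C * (r / n) := by
    filter_upwards [hpc.eventually (gt_mem_nhds hcr), eventually_gt_atTop 0] with n hn hn0
    have hn0' : (0 : ℝ) < n := by exact_mod_cast hn0
    have hpn0 : 0 ≤ p n * n := mul_nonneg (hp n).1 hn0'.le
    have hpn : p n ≤ r / n := (le_div_iff₀ hn0').2 hn.le
    refine (gExp_badCycleCount_le (hp n)).trans ?_
    calc ∑ m ∈ Finset.range n, ((m : ℝ) + 1) ^ 2 * (n : ℝ) ^ (m + 1) * p n ^ (m + 2)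
        = ∑ m ∈ Finset.range n, ((m : ℝ) + 1) ^ 2 * (p n * n) ^ (m + 1) * p n := by
          refine Finset.sum_congr rfl fun m _ => ?_
          rw [mul_pow]; ring
      _ ≤ ∑ m ∈ Finset.range n, ((m : ℝ) + 1) ^ 2 * r ^ (m + 1) * (r / n) := by
          refine Finset.sum_le_sum fun m _ => ?_
          have := (hp n).1
          gcongr
      _ ≤ C * (r / n) := by
          rw [← Finset.sum_mul]
          refine mul_le_mul_of_nonneg_right ?_ (by positivity)
          exact hsum.sum_le_tsum _ fun m _ => by positivity
  have hlim : Tendsto (fun n : ℕ => C * (r / n)) atTop (𝓝 0) := by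
    simpa using (tendsto_const_div_atTop_nhds_zero_nat r).const_mul C
  exact tendsto_of_tendsto_of_tendsto_of_le_of_le' tendsto_const_nhds hlim
    (Eventually.of_forall fun n => gExp_badCycleCount_nonneg (hp n)) hbound
end

section
/- Let (p_n)_{n≥0} be a non-increasing sequence of non-negative real numbers whose series Σ_{n≥0} p_n converges. Then the following are equivalent: (1) p_i ≤ Σ_{j>i} p_j for all i ≥ 0; (2) the set of subsums { Σ_{i∈A} p_i : A ⊆ ℕ } equals the interval [0, Σ_{n≥0} p_n]. Moreover, if the condition p_i ≤ Σ_{j>i} p_j holds for all sufficiently large i, then the set of subsums { Σ_{i∈A} p_i : A ⊆ ℕ } is a finite union of closed intervals. -/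
/-!
Write `r n = Σ_{j ≥ n} p_j` for the tails, so that `r n = p n + r (n+1)` and `r n → 0`.

If `p n ≤ r (n+1)` for all `n`, every `x ∈ [0, r 0]` is a subsum by the greedy algorithm: keep
a remainder, starting from `x`, and subtract `p n` at stage `n` whenever it fits. The remainder
stays in `[0, r n]`, hence tends to `0` (`exists_hasSum_indicator`); this does not use
monotonicity. Conversely, if `r (i+1) < p i`, the midpoint of this gap is not a subsum: a set of
indices meeting `{0, …, i}` has subsum at least `p i` because `p` is non-increasing, and any other
set has subsum at most `r (i+1)`.

If the condition holds only from `N` on, the greedy algorithm applied to the shifted sequence shows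
that the subsums are the union, over the finitely many `F ⊆ {0, …, N-1}`, of the intervals
`[Σ_F p, Σ_F p + r N]`.
-/

/-- The set of subsums of the series `Σ p_n`: all values `Σ_{i ∈ A} p_i` for `A ⊆ ℕ`. -/
def subsums (p : ℕ → ℝ) : Set ℝ :=
  {x | ∃ A : Set ℕ, HasSum (fun i : A => p i) x}

theorem mem_subsums_iff (p : ℕ → ℝ) (x : ℝ) :
    x ∈ subsums p ↔ ∃ A : Set ℕ, HasSum (A.indicator p) x := by
  simp only [subsums, Set.mem_ofPred_eq]
  exact exists_congr fun A => hasSum_subtype_iff_indicator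

theorem tail_eq_shift (p : ℕ → ℝ) (i : ℕ) :
    ∑' j : {j : ℕ // i < j}, p j = ∑' j, p (j + (i + 1)) := by
  let e : ℕ ≃ {j : ℕ // i < j} :=
    { toFun := fun n => ⟨n + (i + 1), by omega⟩
      invFun := fun j => j.1 - (i + 1)
      left_inv := fun n => by simp
      right_inv := fun j => by
        have := j.2
        ext
        simp only
        omega }
  exact (e.tsum_eq (fun j : {j : ℕ // i < j} => p j)).symm

theorem shift_tsum_succ (p : ℕ → ℝ) (hsum : Summable p) (n : ℕ) :
    ∑' j, p (j + n) = p n + ∑' j, p (j + (n + 1)) := by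
  rw [((summable_nat_add_iff n).2 hsum).tsum_eq_zero_add, zero_add]
  congr 1
  exact tsum_congr fun j => by congr 1; omega

open Classical in
/-- The remainder of the greedy algorithm after `n` stages: at stage `n`, the term `p n` is
subtracted whenever it does not exceed the current remainder. -/
noncomputable def greedyRemainder (p : ℕ → ℝ) (x : ℝ) : ℕ → ℝ
  | 0 => x
  | n + 1 => if p n ≤ greedyRemainder p x n then greedyRemainder p x n - p n
      else greedyRemainder p x n

/-- Greedy expansion: when no term exceeds the sum of the later ones, every point between `0` and
the total sum is a subsum. -/
theorem exists_hasSum_indicator (p : ℕ → ℝ) (hnn : ∀ n, 0 ≤ p n) (hsum : Summable p)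
    (h : ∀ n, p n ≤ ∑' j, p (j + (n + 1))) {x : ℝ} (hx0 : 0 ≤ x) (hx1 : x ≤ ∑' n, p n) :
    ∃ A : Set ℕ, HasSum (A.indicator p) x := by
  classical
  have inv : ∀ n, 0 ≤ greedyRemainder p x n ∧ greedyRemainder p x n ≤ ∑' j, p (j + n) := by
    intro n
    induction n with
    | zero => exact ⟨hx0, by simpa [greedyRemainder] using hx1⟩
    | succ n ih =>
      have h1 := shift_tsum_succ p hsum n
      have h2 := h n
      simp only [greedyRemainder]
      split_ifs with hc
      · constructor <;> linarith [ih.1, ih.2]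
      · exact ⟨ih.1, by linarith⟩
  have lim : Filter.Tendsto (greedyRemainder p x) Filter.atTop (nhds 0) :=
    squeeze_zero (fun n => (inv n).1) (fun n => (inv n).2) (tendsto_sum_nat_add p)
  refine ⟨{n | p n ≤ greedyRemainder p x n}, ?_⟩
  rw [hasSum_iff_tendsto_nat_of_nonneg (fun n => Set.indicator_nonneg (fun i _ => hnn i) n)]
  have key : ∀ n, ∑ i ∈ Finset.range n, ({n | p n ≤ greedyRemainder p x n} : Set ℕ).indicator p i
      = x - greedyRemainder p x n := by
    intro n
    induction n with
    | zero => simp [greedyRemainder]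
    | succ n ih =>
      rw [Finset.sum_range_succ, ih]
      simp only [greedyRemainder, Set.indicator_apply, Set.mem_ofPred_eq]
      split_ifs <;> ring
  simp only [key]
  simpa using lim.const_sub x

theorem hasSum_indicator_mem_Icc {p : ℕ → ℝ} (hnn : ∀ n, 0 ≤ p n) (hsum : Summable p)
    {A : Set ℕ} {x : ℝ} (hx : HasSum (A.indicator p) x) : x ∈ Set.Icc 0 (∑' n, p n) :=
  ⟨hx.nonneg fun n => Set.indicator_nonneg (fun i _ => hnn i) n,
    hasSum_le (fun n => Set.indicator_le_self' (fun i _ => hnn i) n) hx hsum.hasSum⟩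

/-- Splitting the index set at `N`: the subsums are a finite union of translates of the set of
subsums of the shifted sequence. -/
theorem mem_subsums_iff_split (p : ℕ → ℝ) (N : ℕ) (x : ℝ) :
    x ∈ subsums p ↔ ∃ F ∈ (Finset.range N).powerset, ∃ B : Set ℕ,
      HasSum (B.indicator fun n => p (n + N)) (x - ∑ i ∈ F, p i) := by
  classical
  rw [mem_subsums_iff]
  constructor
  · rintro ⟨A, hA⟩
    refine ⟨(Finset.range N).filter (· ∈ A), by simp, {n | n + N ∈ A}, ?_⟩
    have h := (hasSum_nat_add_iff' N).2 hA
    have e : ∑ i ∈ (Finset.range N).filter (· ∈ A), p i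
        = ∑ i ∈ Finset.range N, A.indicator p i := by
      simp [Finset.sum_filter, Set.indicator_apply]
    rw [e]
    exact h
  · rintro ⟨F, hF, B, hB⟩
    have hF' : ∀ i ∈ F, i < N := fun i hi =>
      Finset.mem_range.1 (Finset.mem_powerset.1 hF hi)
    set A : Set ℕ := {n | n ∈ F ∨ (N ≤ n ∧ n - N ∈ B)} with hA
    have e1 : (fun n => A.indicator p (n + N)) = B.indicator fun n => p (n + N) := by
      funext n
      have : n + N ∉ F := fun hn => by have := hF' _ hn; omega
      simp [hA, Set.indicator_apply, this]
    have e2 : ∑ i ∈ Finset.range N, A.indicator p i = ∑ i ∈ F, p i := by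
      rw [← Finset.sum_subset (Finset.mem_powerset.1 hF)]
      · exact Finset.sum_congr rfl fun i hi => Set.indicator_of_mem (show i ∈ A from Or.inl hi) p
      · intro i hi hiF
        refine Set.indicator_of_notMem ?_ p
        rintro (h | ⟨h, -⟩)
        · exact hiF h
        · have := Finset.mem_range.1 hi
          omega
    refine ⟨A, (hasSum_nat_add_iff' N).1 ?_⟩
    rw [e1, e2]
    exact hB

/-- If some term exceeds the sum of the later ones, the gap between the two contains a point that
is not a subsum. -/
theorem le_tail_of_subsums_eq (p : ℕ → ℝ) (hmono : Antitone p) (hnn : ∀ n, 0 ≤ p n)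
    (hsum : Summable p) (h : subsums p = Set.Icc 0 (∑' n, p n)) (i : ℕ) :
    p i ≤ ∑' j, p (j + (i + 1)) := by
  by_contra! hlt
  have hr : 0 ≤ ∑' j, p (j + (i + 1)) := tsum_nonneg fun j => hnn _
  have hi : p i ≤ ∑' n, p n := hsum.le_tsum i fun j _ => hnn j
  have hmem : (p i + ∑' j, p (j + (i + 1))) / 2 ∈ subsums p := by
    rw [h]
    constructor <;> linarith
  obtain ⟨A, hA⟩ := (mem_subsums_iff p _).1 hmem
  by_cases hj : ∃ j ≤ i, j ∈ A
  · obtain ⟨j, hji, hjA⟩ := hj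
    have h1 := le_hasSum hA j fun k _ => Set.indicator_nonneg (fun i _ => hnn i) k
    rw [Set.indicator_of_mem hjA] at h1
    linarith [hmono hji]
  · push Not at hj
    have h1 := (hasSum_nat_add_iff' (i + 1)).2 hA
    rw [Finset.sum_eq_zero (fun j hj' => Set.indicator_of_notMem
      (hj j (by have := Finset.mem_range.1 hj'; omega)) p), sub_zero] at h1
    have h2 := hasSum_le (fun n => Set.indicator_le_self' (fun i _ => hnn i) (n + (i + 1))) h1
      ((summable_nat_add_iff (i + 1)).2 hsum).hasSum
    linarith

/-- Kakeya's criterion: for a non-increasing summable sequence of non-negative reals,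
`p_i ≤ Σ_{j>i} p_j` for all `i` iff the set of subsums is the full interval
`[0, Σ p_n]`; moreover if `p_i ≤ Σ_{j>i} p_j` holds for all sufficiently large `i`,
then the set of subsums is a finite union of closed intervals. -/
theorem kakeya_criterion (p : ℕ → ℝ) (hmono : Antitone p) (hnn : ∀ n, 0 ≤ p n)
    (hsum : Summable p) :
    ((∀ i, p i ≤ ∑' j : {j : ℕ // i < j}, p j) ↔
      subsums p = Set.Icc 0 (∑' n, p n)) ∧
    ((∃ N, ∀ i, N ≤ i → p i ≤ ∑' j : {j : ℕ // i < j}, p j) →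
      ∃ (k : ℕ) (a b : Fin k → ℝ), (∀ t, a t ≤ b t) ∧
        subsums p = ⋃ t, Set.Icc (a t) (b t)) := by
  simp only [tail_eq_shift]
  refine ⟨⟨fun h => ?_, fun h => le_tail_of_subsums_eq p hmono hnn hsum h⟩, ?_⟩
  · ext x
    rw [mem_subsums_iff]
    exact ⟨fun ⟨A, hA⟩ => hasSum_indicator_mem_Icc hnn hsum hA,
      fun hx => exists_hasSum_indicator p hnn hsum h hx.1 hx.2⟩
  · rintro ⟨N, hN⟩
    have hsumN : Summable fun n => p (n + N) := (summable_nat_add_iff N).2 hsum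
    have hcond : ∀ n, p (n + N) ≤ ∑' j, p (j + (n + 1) + N) := fun n => by
      refine (hN (n + N) (by omega)).trans_eq (tsum_congr fun j => ?_)
      congr 1
      omega
    have hr : 0 ≤ ∑' j, p (j + N) := tsum_nonneg fun j => hnn _
    let e := (Finset.range N).powerset.equivFin
    refine ⟨_, fun t => ∑ i ∈ (e.symm t).1, p i,
      fun t => ∑ i ∈ (e.symm t).1, p i + ∑' j, p (j + N), fun t => by linarith, ?_⟩
    ext x
    rw [mem_subsums_iff_split p N, Set.mem_iUnion]
    constructor
    · rintro ⟨F, hF, B, hB⟩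
      have hx := hasSum_indicator_mem_Icc (fun n => hnn _) hsumN hB
      refine ⟨e ⟨F, hF⟩, ?_⟩
      simp only [Equiv.symm_apply_apply]
      constructor <;> linarith [hx.1, hx.2]
    · rintro ⟨t, ht⟩
      exact ⟨(e.symm t).1, (e.symm t).2, exists_hasSum_indicator _ (fun n => hnn _) hsumN hcond
        (by linarith [ht.1]) (by linarith [ht.2])⟩
end

section
/- For every integer k ≥ 4, the sum of 1/aut(H) over all isomorphism classes H of finite simple graphs with exactly k edges, all of whose connected components are unicyclic, is at least (2k−7)/2. -/
/-- Graphs on `k` vertices with exactly `k` edges all of whose connected components are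
unicyclic. (Any graph with `k` edges whose components are all unicyclic has `k` vertices.) -/
def UnicyclicComponentsGraph (k : ℕ) : Type :=
  {G : SimpleGraph (Fin k) //
    (∀ K : G.ConnectedComponent, IsUnicyclic (G.induce K.supp)) ∧ G.edgeSet.ncard = k}

/-- The setoid identifying isomorphic graphs, so that the quotient is the set of isomorphism
classes of graphs with `k` edges all of whose components are unicyclic. -/
def isoSetoid (k : ℕ) : Setoid (UnicyclicComponentsGraph k) :=
  ⟨fun G H => Nonempty (G.1 ≃g H.1),
    ⟨fun _ => ⟨RelIso.refl _⟩, fun ⟨e⟩ => ⟨e.symm⟩, fun ⟨e⟩ ⟨f⟩ => ⟨e.trans f⟩⟩⟩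

/-! ### Rigidity of a path with a chord -/

/-- Adjacency in the graph formed by the one-way infinite path `0, 1, 2, …` and the chord
`{i, j}`. -/
def ChordAdj (i j m n : ℕ) : Prop :=
  m + 1 = n ∨ n + 1 = m ∨ (m = i ∧ n = j) ∨ (m = j ∧ n = i)

/-- `f` restricts to an isomorphism from the path `0, …, k - 1` with chord `{i', j'}` to the same
path with chord `{i, j}`. Values of `f` outside `[0, k)` are irrelevant. -/
structure IsChordIso (k i' j' i j : ℕ) (f : ℕ → ℕ) : Prop where
  lt : ∀ m < k, f m < k
  inj : ∀ m < k, ∀ n < k, f m = f n → m = n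
  surj : ∀ n < k, ∃ m < k, f m = n
  adj : ∀ m < k, ∀ n < k, (ChordAdj i' j' m n ↔ ChordAdj i j (f m) (f n))

/-- A vertex of degree at least three is an end of the chord. -/
lemma chordAdj_three {i j v a b c : ℕ} (ha : ChordAdj i j a v) (hb : ChordAdj i j b v)
    (hc : ChordAdj i j c v) (hab : a ≠ b) (hac : a ≠ c) (hbc : b ≠ c) : v = i ∨ v = j := by
  unfold ChordAdj at ha hb hc
  omega

/-- An injection of `[0, k)` into itself with steps `±1` is the identity or the reversal: it
cannot turn back, so all steps have the same sign. -/
lemma path_rigid {k : ℕ} {f : ℕ → ℕ} (hk : 2 ≤ k) (lt : ∀ m < k, f m < k)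
    (inj : ∀ m < k, ∀ n < k, f m = f n → m = n)
    (step : ∀ m, m + 1 < k → f m + 1 = f (m + 1) ∨ f (m + 1) + 1 = f m) :
    (∀ m < k, f m = m) ∨ (∀ m < k, f m = k - 1 - m) := by
  rcases step 0 (by omega) with h0 | h0
  · have key : ∀ m, m + 1 < k → f m + 1 = f (m + 1) ∧ f (m + 1) = f 0 + (m + 1) := by
      intro m
      induction m with
      | zero => intro _; simp only [zero_add] at *; omega
      | succ m ih =>
        intro hm
        have h1 := ih (by omega)
        have h2 := step (m + 1) hm
        have h3 := inj m (by omega) (m + 1 + 1) hm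
        omega
    left
    have h1 := key (k - 2) (by omega)
    have h2 := lt (k - 2 + 1) (by omega)
    intro m hm
    rcases m with _ | m
    · omega
    · have := key m hm
      omega
  · have key : ∀ m, m + 1 < k → f (m + 1) + 1 = f m ∧ f (m + 1) + (m + 1) = f 0 := by
      intro m
      induction m with
      | zero => intro _; simp only [zero_add] at *; omega
      | succ m ih =>
        intro hm
        have h1 := ih (by omega)
        have h2 := step (m + 1) hm
        have h3 := inj m (by omega) (m + 1 + 1) hm
        omega
    right
    have h1 := key (k - 2) (by omega)
    have h2 := lt 0 (by omega)
    intro m hm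
    rcases m with _ | m
    · omega
    · have := key m hm
      omega

/-- If both ends of the target chord have degree three, the chord is mapped to the chord, and the
underlying path is preserved. -/
lemma rigid_pos {k i' j' i j : ℕ} {f : ℕ → ℕ} (hi : 1 ≤ i) (hij : i + 2 ≤ j) (hj : j + 2 ≤ k)
    (hij' : i' + 2 ≤ j') (hj' : j' + 2 ≤ k) (hf : IsChordIso k i' j' i j f) :
    (∀ m < k, f m = m) ∨ (∀ m < k, f m = k - 1 - m) := by
  have end_of : ∀ v < k, ∀ a < k, ∀ b < k, ∀ c < k, ChordAdj i j a v → ChordAdj i j b v →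
      ChordAdj i j c v → a ≠ b → a ≠ c → b ≠ c → f i' = v ∨ f j' = v := by
    intro v hv a ha b hb c hc h1 h2 h3 hab hac hbc
    obtain ⟨v, hv', rfl⟩ := hf.surj v hv
    obtain ⟨a, ha', rfl⟩ := hf.surj a ha
    obtain ⟨b, hb', rfl⟩ := hf.surj b hb
    obtain ⟨c, hc', rfl⟩ := hf.surj c hc
    rcases chordAdj_three ((hf.adj a ha' v hv').2 h1) ((hf.adj b hb' v hv').2 h2)
      ((hf.adj c hc' v hv').2 h3) (fun h => hab (h ▸ rfl)) (fun h => hac (h ▸ rfl))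
      (fun h => hbc (h ▸ rfl)) with h | h
    · left; rw [h]
    · right; rw [h]
  have h1 := end_of i (by omega) (i - 1) (by omega) (i + 1) (by omega) j (by omega)
    (by unfold ChordAdj; omega) (by unfold ChordAdj; omega) (by unfold ChordAdj; omega)
    (by omega) (by omega) (by omega)
  have h2 := end_of j (by omega) (j - 1) (by omega) (j + 1) (by omega) i (by omega)
    (by unfold ChordAdj; omega) (by unfold ChordAdj; omega) (by unfold ChordAdj; omega)
    (by omega) (by omega) (by omega)
  refine path_rigid (by omega) hf.lt hf.inj fun m hm => ?_
  have h3 := (hf.adj m (by omega) (m + 1) hm).1 (Or.inl rfl)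
  have e1 := hf.inj m (by omega) i' (by omega)
  have e2 := hf.inj m (by omega) j' (by omega)
  have e3 := hf.inj (m + 1) (by omega) i' (by omega)
  have e4 := hf.inj (m + 1) (by omega) j' (by omega)
  unfold ChordAdj at h3
  omega

/-- In a lollipop the end of the tail is fixed, hence so is the whole tail, and from the vertex `j`
at which it meets the cycle there are two ways to continue along the cycle. -/
lemma rigid_zero {k i' j' j : ℕ} {f : ℕ → ℕ} (hij : 2 ≤ j) (hj : j + 2 ≤ k)
    (hij' : i' + 2 ≤ j') (hj' : j' + 2 ≤ k) (hf : IsChordIso k i' j' 0 j f) :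
    (∀ m < k, f m = m) ∨ (∀ m < k, f m = if m < j then j - 1 - m else m) := by
  have last : f (k - 1) = k - 1 := by
    by_contra hne
    have hlt := hf.lt (k - 1) (by omega)
    obtain ⟨a, b, ha, hb, hab, h1, h2⟩ : ∃ a b, a < k ∧ b < k ∧ a ≠ b ∧
        ChordAdj 0 j a (f (k - 1)) ∧ ChordAdj 0 j b (f (k - 1)) := by
      by_cases h0 : f (k - 1) = 0
      · exact ⟨1, j, by omega, by omega, by omega, by unfold ChordAdj; omega,
          by unfold ChordAdj; omega⟩
      · exact ⟨f (k - 1) - 1, f (k - 1) + 1, by omega, by omega, by omega,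
          by unfold ChordAdj; omega, by unfold ChordAdj; omega⟩
    obtain ⟨a, ha', rfl⟩ := hf.surj a ha
    obtain ⟨b, hb', rfl⟩ := hf.surj b hb
    have h3 := (hf.adj a ha' _ (by omega)).2 h1
    have h4 := (hf.adj b hb' _ (by omega)).2 h2
    have : a = b := by
      unfold ChordAdj at h3 h4
      omega
    exact hab (this ▸ rfl)
  have step : ∀ m, m + 1 < k → ChordAdj 0 j (f m) (f (m + 1)) := fun m hm =>
    (hf.adj m (by omega) (m + 1) hm).1 (Or.inl rfl)
  have tail : ∀ d, j + d < k → f (k - 1 - d) = k - 1 - d := by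
    intro d
    induction d using Nat.strong_induction_on with
    | _ d ih =>
      intro hd
      rcases d with _ | d
      · exact last
      have h1 := ih d (by omega) (by omega)
      have h2 := step (k - 1 - (d + 1)) (by omega)
      have e : k - 1 - (d + 1) + 1 = k - 1 - d := by omega
      rw [e, h1] at h2
      have hlt := hf.lt (k - 1 - (d + 1)) (by omega)
      rcases d with _ | d
      · unfold ChordAdj at h2
        omega
      have h3 := ih d (by omega) (by omega)
      have h4 := hf.inj (k - 1 - (d + 1 + 1)) (by omega) (k - 1 - d) (by omega)
      unfold ChordAdj at h2
      omega
  have tail' : ∀ m, j ≤ m → m < k → f m = m := by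
    intro m h1 h2
    have := tail (k - 1 - m) (by omega)
    rwa [show k - 1 - (k - 1 - m) = m by omega] at this
  -- The remaining vertices are mapped below `j`, since `[j, k)` is already taken.
  have low : ∀ m < j, f m < j := by
    intro m hm
    by_contra h
    have h1 := hf.lt m (by omega)
    have := hf.inj m (by omega) (f m) h1 (tail' _ (by omega) h1).symm
    omega
  have hstart := step (j - 1) (by omega)
  rw [show j - 1 + 1 = j by omega, tail' j le_rfl (by omega)] at hstart
  have hstart' := low (j - 1) (by omega)
  have stepLow : ∀ m, m + 1 < j → f m + 1 = f (m + 1) ∨ f (m + 1) + 1 = f m := by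
    intro m hm
    have h1 := step m (by omega)
    have h2 := low m (by omega)
    have h3 := low (m + 1) (by omega)
    unfold ChordAdj at h1
    omega
  rcases path_rigid hij low (fun m hm n hn => hf.inj m (by omega) n (by omega)) stepLow with h | h
  · left
    intro m hm
    by_cases hmj : m < j
    · exact h m hmj
    · exact tail' m (by omega) hm
  · right
    intro m hm
    split_ifs with hmj
    · exact h m hmj
    · exact tail' m (by omega) hm

/-- Over all source chords together, there are at most two isomorphisms onto a given path with
chord. -/
lemma rigid {k i j : ℕ} (hij : i + 2 ≤ j) (hj : j + 2 ≤ k) :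
    ∃ g : ℕ → ℕ, ∀ i' j' f, i' + 2 ≤ j' → j' + 2 ≤ k → IsChordIso k i' j' i j f →
      (∀ m < k, f m = m) ∨ (∀ m < k, f m = g m) := by
  rcases Nat.eq_zero_or_pos i with rfl | hi
  · exact ⟨_, fun i' j' f h1 h2 hf => rigid_zero (by omega) hj h1 h2 hf⟩
  · exact ⟨_, fun i' j' f h1 h2 hf => rigid_pos hi hij hj h1 h2 hf⟩

/-! ### Paths with a chord as unicyclic graphs -/

/-- The path `0, 1, …, k - 1` together with the chord `{i, j}`. -/
def chordPath (k i j : ℕ) : SimpleGraph (Fin k) where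
  Adj u v := u ≠ v ∧ ChordAdj i j u v
  symm := ⟨fun u v h => ⟨h.1.symm, by have := h.2; unfold ChordAdj at *; omega⟩⟩
  loopless := ⟨fun _ h => h.1 rfl⟩

lemma chordPath_adj {k i j : ℕ} (hij : i + 2 ≤ j) (u v : Fin k) :
    (chordPath k i j).Adj u v ↔ ChordAdj i j u v := by
  refine ⟨fun h => h.2, fun h => ⟨?_, h⟩⟩
  rintro rfl
  unfold ChordAdj at h
  omega

lemma chordPath_connected {k i j : ℕ} (hk : 0 < k) (hij : i + 2 ≤ j) :
    (chordPath k i j).Connected := by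
  have h : ∀ m, ∀ hm : m < k, (chordPath k i j).Reachable ⟨0, hk⟩ ⟨m, hm⟩ := by
    intro m
    induction m with
    | zero => intro _; rfl
    | succ m ih =>
      intro hm
      refine (ih (by omega)).trans (SimpleGraph.Adj.reachable ?_)
      exact (chordPath_adj hij _ _).2 (Or.inl rfl)
  have : Nonempty (Fin k) := ⟨⟨0, hk⟩⟩
  exact ⟨fun u v => (h u u.2).symm.trans (h v v.2)⟩

lemma chordPath_ncard {k i j : ℕ} (hij : i + 2 ≤ j) (hj : j + 2 ≤ k) :
    (chordPath k i j).edgeSet.ncard = k := by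
  -- The path edges, in order, followed by the chord.
  let e : Fin k → Sym2 (Fin k) := fun m =>
    if h : m.1 + 1 < k then s(m, ⟨m.1 + 1, h⟩) else s(⟨i, by omega⟩, ⟨j, by omega⟩)
  have he : Function.Injective e := by
    intro a b hab
    have ha := a.2
    have hb := b.2
    simp only [e] at hab
    split_ifs at hab <;> simp only [Sym2.eq_iff, Fin.ext_iff] at hab <;> ext <;> omega
  have hr : Set.range e = (chordPath k i j).edgeSet := by
    ext x
    constructor
    · rintro ⟨m, rfl⟩
      simp only [e]
      split_ifs with h
      · exact (chordPath_adj hij _ _).2 (Or.inl rfl)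
      · exact (chordPath_adj hij _ _).2 (Or.inr (Or.inr (Or.inl ⟨rfl, rfl⟩)))
    · induction x with
      | _ u v =>
      intro h
      rcases (chordPath_adj hij u v).1 h with h | h | h | h
      · refine ⟨u, ?_⟩
        have hv := v.2
        simp only [e]
        rw [dif_pos (by omega)]
        exact Sym2.eq_iff.2 (Or.inl ⟨rfl, Fin.ext h⟩)
      · refine ⟨v, ?_⟩
        have hu := u.2
        simp only [e]
        rw [dif_pos (by omega)]
        exact Sym2.eq_iff.2 (Or.inr ⟨rfl, Fin.ext h⟩)
      · refine ⟨⟨k - 1, by omega⟩, ?_⟩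
        simp only [e]
        rw [dif_neg (by omega)]
        simp only [Sym2.eq_iff, Fin.ext_iff]
        omega
      · refine ⟨⟨k - 1, by omega⟩, ?_⟩
        simp only [e]
        rw [dif_neg (by omega)]
        simp only [Sym2.eq_iff, Fin.ext_iff]
        omega
  rw [← hr, ← Set.image_univ, Set.ncard_image_of_injective _ he, Set.ncard_univ, Nat.card_fin]

lemma chordPath_unicyclic {k i j : ℕ} (hij : i + 2 ≤ j) (hj : j + 2 ≤ k)
    (K : (chordPath k i j).ConnectedComponent) :
    IsUnicyclic ((chordPath k i j).induce K.supp) := by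
  have hc := chordPath_connected (k := k) (by omega) hij
  have hs : K.supp = Set.univ := by
    ext v
    simp only [Set.mem_univ, iff_true, SimpleGraph.ConnectedComponent.mem_supp_iff]
    exact hc.preconnected.subsingleton_connectedComponent.elim _ _
  rw [hs]
  have e := (chordPath k i j).induceUnivIso
  refine ⟨e.connected_iff.2 hc, ?_⟩
  rw [← Nat.card_coe_set_eq, Nat.card_congr e.mapEdgeSet, Nat.card_congr e.toEquiv,
    Nat.card_coe_set_eq, chordPath_ncard hij hj, Nat.card_fin]

/-- The chords `(i, j)` used in the bound: first `(0, 2), …, (0, k - 2)`, then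
`(1, 3), …, (k - 4, k - 2)`. -/
def chord (k : ℕ) (t : Fin (2 * k - 7)) : ℕ × ℕ :=
  if t.1 < k - 3 then (0, t.1 + 2) else (t.1 - (k - 3) + 1, t.1 - (k - 3) + 3)

lemma chord_spec (k : ℕ) (t : Fin (2 * k - 7)) :
    (chord k t).1 + 2 ≤ (chord k t).2 ∧ (chord k t).2 + 2 ≤ k := by
  have := t.2
  unfold chord
  split_ifs <;> dsimp only <;> omega

lemma chord_injective (k : ℕ) : Function.Injective (chord k) := by
  intro s t h
  unfold chord at h
  split_ifs at h <;> simp only [Prod.mk.injEq] at h <;> ext <;> omega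

/-- The path with the `t`-th chord, as one of the graphs being counted. -/
def chordGraph (k : ℕ) (t : Fin (2 * k - 7)) : UnicyclicComponentsGraph k :=
  ⟨chordPath k (chord k t).1 (chord k t).2,
    chordPath_unicyclic (chord_spec k t).1 (chord_spec k t).2,
    chordPath_ncard (chord_spec k t).1 (chord_spec k t).2⟩

lemma chordGraph_injective (k : ℕ) :
    Function.Injective fun t => (chordGraph k t).1 := by
  intro s t h
  obtain ⟨h1, h2⟩ := chord_spec k s
  obtain ⟨h3, h4⟩ := chord_spec k t
  have := (chordPath_adj (k := k) h1 ⟨(chord k s).1, by omega⟩ ⟨(chord k s).2, by omega⟩).2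
    (Or.inr (Or.inr (Or.inl ⟨rfl, rfl⟩)))
  change chordPath k _ _ = chordPath k _ _ at h
  rw [h, chordPath_adj h3] at this
  apply chord_injective k
  unfold ChordAdj at this
  ext <;> dsimp only at this <;> omega

/-! ### Counting isomorphisms -/

/-- At most two permutations of the vertices map some chosen graph onto the `t`-th one. -/
lemma card_isos_le (k : ℕ) (t : Fin (2 * k - 7)) :
    {σ : Equiv.Perm (Fin k) | ∃ s, ∀ u v,
      (chordGraph k s).1.Adj u v ↔ (chordGraph k t).1.Adj (σ u) (σ v)}.ncard ≤ 2 := by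
  obtain ⟨h1, h2⟩ := chord_spec k t
  obtain ⟨g, hg⟩ := rigid h1 h2
  set S := {σ : Equiv.Perm (Fin k) | ∃ s, ∀ u v,
      (chordGraph k s).1.Adj u v ↔ (chordGraph k t).1.Adj (σ u) (σ v)} with hS
  have key : ∀ σ ∈ S, (∀ u, (σ u).1 = u.1) ∨ (∀ u, (σ u).1 = g u.1) := by
    rintro σ ⟨s, hs⟩
    obtain ⟨h3, h4⟩ := chord_spec k s
    let f : ℕ → ℕ := fun m => if h : m < k then (σ ⟨m, h⟩).1 else 0
    have hfv : ∀ u : Fin k, f u.1 = (σ u).1 := fun u => dif_pos u.2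
    have hf : IsChordIso k (chord k s).1 (chord k s).2 (chord k t).1 (chord k t).2 f := by
      refine ⟨fun m hm => ?_, fun m hm n hn h => ?_, fun n hn => ?_, fun m hm n hn => ?_⟩
      · rw [hfv ⟨m, hm⟩]; exact (σ _).2
      · rw [hfv ⟨m, hm⟩, hfv ⟨n, hn⟩] at h
        exact congrArg Fin.val (σ.injective (Fin.ext h))
      · refine ⟨(σ.symm ⟨n, hn⟩).1, (σ.symm ⟨n, hn⟩).2, ?_⟩
        rw [hfv, Equiv.apply_symm_apply]
      · rw [hfv ⟨m, hm⟩, hfv ⟨n, hn⟩, ← chordPath_adj h1, ← chordPath_adj h3 ⟨m, hm⟩ ⟨n, hn⟩]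
        exact hs _ _
    rcases hg _ _ f h3 h4 hf with h | h
    · exact Or.inl fun u => by rw [← hfv, h _ u.2]
    · exact Or.inr fun u => by rw [← hfv, h _ u.2]
  rcases S.eq_empty_or_nonempty with h0 | ⟨σ₀, hσ₀⟩
  · simp [h0]
  by_cases hne : ∃ τ ∈ S, τ ≠ 1
  · obtain ⟨τ, hτ, hτ1⟩ := hne
    have hτg : ∀ u, (τ u).1 = g u.1 :=
      (key τ hτ).resolve_left fun h => hτ1 (Equiv.ext fun u => Fin.ext (h u))
    have hsub : S ⊆ {1, τ} := by
      intro σ hσ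
      rcases key σ hσ with h | h
      · exact Or.inl (Equiv.ext fun u => Fin.ext (h u))
      · exact Or.inr (Equiv.ext fun u => Fin.ext ((h u).trans (hτg u).symm))
    exact (Set.ncard_le_ncard hsub).trans (by simpa using Set.ncard_insert_le 1 {τ})
  · push Not at hne
    have hsub : S ⊆ {1} := hne
    exact (Set.ncard_le_ncard hsub).trans (by simp)

/-- An isomorphism class with automorphism group of order `a` contains at most `2 / a` of the
chosen graphs: composing isomorphisms to a representative `H` with automorphisms of `H` yields
distinct isomorphisms onto one fixed chosen graph. -/
lemma card_mul_card_aut_le (k : ℕ) (H : SimpleGraph (Fin k)) :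
    Nat.card {t : Fin (2 * k - 7) // Nonempty ((chordGraph k t).1 ≃g H)} * Nat.card (H ≃g H)
      ≤ 2 := by
  rcases isEmpty_or_nonempty {t : Fin (2 * k - 7) // Nonempty ((chordGraph k t).1 ≃g H)} with
    h0 | ⟨⟨t₀, ⟨φ₀⟩⟩⟩
  · simp
  let T := {t : Fin (2 * k - 7) // Nonempty ((chordGraph k t).1 ≃g H)}
  let φ : ∀ t : T, (chordGraph k t.1).1 ≃g H := fun t => t.2.some
  let F : T × (H ≃g H) → Equiv.Perm (Fin k) := fun p =>
    (((φ p.1).trans p.2).trans φ₀.symm).toEquiv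
  have hadj : ∀ (p : T × (H ≃g H)) (u v), (chordGraph k p.1.1).1.Adj u v ↔
      (chordGraph k t₀).1.Adj (F p u) (F p v) := fun p u v =>
    (((φ p.1).trans p.2).trans φ₀.symm).map_rel_iff.symm
  have hF : Function.Injective F := by
    rintro ⟨s, α⟩ ⟨t, β⟩ h
    have hst : s = t := by
      refine Subtype.ext (chordGraph_injective k (SimpleGraph.ext ?_))
      ext u v
      have h1 := hadj ⟨s, α⟩ u v
      rw [h, ← hadj ⟨t, β⟩ u v] at h1
      exact h1
    subst hst
    refine Prod.ext rfl (RelIso.ext fun x => ?_)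
    have h1 : φ₀.symm (α (φ s ((φ s).symm x))) = φ₀.symm (β (φ s ((φ s).symm x))) :=
      Equiv.congr_fun h ((φ s).symm x)
    simpa using h1
  calc Nat.card T * Nat.card (H ≃g H) = (Set.range F).ncard := by
        rw [← Nat.card_prod, ← Set.image_univ, Set.ncard_image_of_injective _ hF, Set.ncard_univ]
    _ ≤ _ := Set.ncard_le_ncard (by rintro _ ⟨p, rfl⟩; exact ⟨p.1.1, hadj p⟩)
    _ ≤ 2 := card_isos_le k t₀

/-- For `k ≥ 4`, the sum of `1/aut(H)` over all isomorphism classes of graphs with exactly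
`k` edges, all of whose connected components are unicyclic, is at least `(2k-7)/2`. -/
theorem sum_inv_aut_ge (k : ℕ) (hk : 4 ≤ k) :
    (2 * (k : ℝ) - 7) / 2 ≤
      ∑ᶠ q : Quotient (isoSetoid k),
        1 / (Nat.card ((q.out : UnicyclicComponentsGraph k).1 ≃g
          (q.out : UnicyclicComponentsGraph k).1) : ℝ) := by
  classical
  have : Finite (UnicyclicComponentsGraph k) := by
    unfold UnicyclicComponentsGraph
    infer_instance
  have := Fintype.ofFinite (Quotient (isoSetoid k))
  rw [finsum_eq_sum_of_fintype]
  let c : Fin (2 * k - 7) → Quotient (isoSetoid k) := fun t => Quotient.mk _ (chordGraph k t)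
  have hcard : (2 * k - 7 : ℕ) =
      ∑ q : Quotient (isoSetoid k), (Finset.univ.filter fun t => c t = q).card := by
    rw [← Finset.card_eq_sum_card_fiberwise (fun _ _ => Finset.mem_univ _), Finset.card_univ,
      Fintype.card_fin]
  have hcard' : (2 * (k : ℝ) - 7) =
      ∑ q : Quotient (isoSetoid k), ((Finset.univ.filter fun t => c t = q).card : ℝ) := by
    rw [← Nat.cast_sum, ← hcard, Nat.cast_sub (by omega)]
    push_cast
    ring
  rw [hcard', Finset.sum_div]
  refine Finset.sum_le_sum fun q _ => ?_
  have h := card_mul_card_aut_le k q.out.1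
  have hfib : Nat.card {t : Fin (2 * k - 7) // Nonempty ((chordGraph k t).1 ≃g q.out.1)} =
      (Finset.univ.filter fun t => c t = q).card := by
    rw [Nat.card_eq_fintype_card, Fintype.card_subtype]
    congr 1
    ext t
    simp only [Finset.mem_filter, Finset.mem_univ, true_and]
    refine Iff.trans ?_ (iff_of_eq (congrArg (c t = ·) (Quotient.out_eq q)))
    exact ⟨fun h => Quotient.sound h, fun h => Quotient.exact h⟩
  rw [hfib] at h
  have : Finite (q.out.1 ≃g q.out.1) :=
    Finite.of_injective (fun e => e.toEquiv) RelIso.toEquiv_injective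
  have hpos : 0 < Nat.card (q.out.1 ≃g q.out.1) := Nat.card_pos_iff.2 ⟨⟨RelIso.refl _⟩, this⟩
  rw [div_le_div_iff₀ (by norm_num) (by exact_mod_cast hpos), one_mul]
  exact_mod_cast h
end

section
/- Fix an integer d ≥ 3 and let H be a finite nonempty d-uniform hypergraph each of whose connected components is a unicycle (i.e., is connected with excess 0). Then (d−2)!^{m} / aut(H) ≤ ((d−2)/(d−1))², where m is the number of edges of H and aut(H) is the number of automorphisms of H (permutations of the vertex set of H mapping edges to edges). -/
/-!
Call a vertex *core* if it lies in at least two edges, and let `c e` be the number of core vertices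
of the edge `e`. The other `d - c e` vertices of `e` are private to `e`, because the unicycle
condition excludes isolated vertices.

An automorphism of the incidence structure of core vertices and edges preserves `c`, hence extends
to `H`, and the extensions differ by permutations of the private vertices. So
`aut(H) ≥ G * ∏ (d - c e)!`, where `G` counts the core automorphisms (`card_coreAut_mul_le`).

Summing the excess over all components shows that the bipartite incidence graph of core vertices and
edges has average degree 2 (`sum_degIn`). Core vertices have degree at least 2 in it, and an edge `e`
has degree `c e ≥ 1`. Let `L` be the number of edges with `c e = 1`. With `k = d - 2`, comparing each
factorial with `k!` gives `∏ (d - c e)! ≥ k! ^ m * ((k + 1) / k) ^ L` (`factorial_pow_mul_le`), so it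
remains to see that `G * ((k + 1) / k) ^ L ≥ ((k + 1) / k) ^ 2`, where `(k + 1) / k ≤ 2`.

* If `L ≥ 2`, this is clear.
* If `L = 0`, the incidence graph is 2-regular, and reflections about an edge and about a core vertex
  of a cycle give `G ≥ 4` (`four_le_card_coreAut`).
* If `L = 1`, all degrees are 2 except for one 1 and one 3, so one component of the graph is a cycle
  with a pendant path, and the reflection of the cycle about the attaching node gives `G ≥ 2`
  (`two_le_card_coreAut`).
-/

open scoped Classical

/-- Two vertices are connected in the hypergraph with edge set `E` if they are joined by a
chain of edges (reflexive–transitive closure of sharing an edge). -/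
def hypReach {N : ℕ} (E : Finset (Finset (Fin N))) (v w : Fin N) : Prop :=
  Relation.ReflTransGen (fun a b => ∃ e ∈ E, a ∈ e ∧ b ∈ e) v w

open scoped Classical in
/-- Each connected component of the `d`-uniform hypergraph with edge set `E` on `Fin N` is a
unicycle: each component is connected by construction, and has excess `0`, i.e. for every
vertex `v`, `(d-1)·#(edges in the component of v) = #(vertices in the component of v)`. -/
def componentsUnicycles (d N : ℕ) (E : Finset (Finset (Fin N))) : Prop :=
  ∀ v : Fin N,
    (d - 1) * (E.filter fun e => ∃ w ∈ e, hypReach E v w).card =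
      (Finset.univ.filter fun w => hypReach E v w).card

/-! ### Reflections of cycles in 2-coloured graphs -/

/-- Two fixed-point-free involutions `a`, `b` generate a dihedral group in which only rotations can
have fixed points, so stabilizers are normal and each orbit has a reflection `φ` commuting with
`a` and `b` and sending a given point `x` to `a x`. The colouring `col` is any function fixed by
`a` and flipped by `b`; it is preserved by `φ`. -/
theorem exists_dihedral_reflection {F : Type*} (a b : Equiv.Perm F)
    (ha : ∀ y, a (a y) = y) (hb : ∀ y, b (b y) = y)
    (ha' : ∀ y, a y ≠ y) (hb' : ∀ y, b y ≠ y) (x : F) (col : F → Bool)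
    (hca : ∀ y, col (a y) = col y) (hcb : ∀ y, col (b y) = !col y) :
    ∃ φ : F → F, Function.Involutive φ ∧ (∀ y, φ (a y) = a (φ y)) ∧
      (∀ y, φ (b y) = b (φ y)) ∧ φ x = a x ∧ ∀ y, col (φ y) = col y := by
  obtain ⟨c, hc⟩ : ∃ c : Equiv.Perm F, c = b * a := ⟨_, rfl⟩
  have hcy : ∀ y, c y = b (a y) := fun y => by rw [hc]; rfl
  have hcinv : ∀ y, c⁻¹ y = a (b y) := fun y => by
    rw [Equiv.Perm.inv_eq_iff_eq, hcy, ha, hb]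
  have hac : ∀ (k : ℤ) y, a ((c ^ k) y) = (c ^ (-k)) (a y) := by
    intro k y
    have h : SemiconjBy a c c⁻¹ := by
      ext y
      change a (c y) = c⁻¹ (a y)
      rw [hcy, hcinv]
    have := congrArg (fun p : Equiv.Perm F => p y) (h.zpow_right k).eq
    simpa using this
  have hbc : ∀ (k : ℤ) y, b ((c ^ k) y) = (c ^ (-k)) (b y) := by
    intro k y
    have h : SemiconjBy b c c⁻¹ := by
      ext y
      change b (c y) = c⁻¹ (b y)
      rw [hcy, hcinv, hb, hb]
    have := congrArg (fun p : Equiv.Perm F => p y) (h.zpow_right k).eq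
    simpa using this
  have hadd : ∀ (j k : ℤ) y, (c ^ (j + k)) y = (c ^ j) ((c ^ k) y) := fun j k y => by
    rw [zpow_add]; rfl
  have hbx : ∀ y, b y = (c ^ (1 : ℤ)) (a y) := fun y => by simp [hcy, ha]
  -- the two rotation orbits of `x` and `a x` are disjoint
  have hne : ∀ i : ℤ, (c ^ i) x ≠ a x := by
    intro i hi
    rcases Int.even_or_odd' i with ⟨t, rfl | rfl⟩
    · apply ha' ((c ^ t) x)
      rw [hac, ← hi, ← hadd]
      congr 2
      ring
    · apply hb' (a ((c ^ t) x))
      rw [← hcy, hac, ← hi, ← hadd]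
      have : c ((c ^ t) x) = (c ^ (1 + t)) x := by rw [hadd]; simp
      rw [this]
      congr 2
      ring
  have hdisj : ∀ k j : ℤ, (c ^ k) x ≠ (c ^ j) (a x) := by
    intro k j h
    apply hne (-j + k)
    rw [hadd, h, ← hadd]
    simp
  have hw1 : ∀ y (k j : ℤ), (c ^ k) y = (c ^ j) y → (c ^ k) (a y) = (c ^ j) (a y) := by
    intro y k j h
    have h2 := congrArg a h
    rw [hac, hac] at h2
    have h3 := congrArg (c ^ (k + j)) h2
    rw [← hadd, ← hadd] at h3
    ring_nf at h3
    exact h3.symm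
  obtain ⟨φ, hφ1, hφ2, hφ3⟩ : ∃ φ : F → F, (∀ k : ℤ, φ ((c ^ k) x) = (c ^ k) (a x)) ∧
      (∀ k : ℤ, φ ((c ^ k) (a x)) = (c ^ k) x) ∧
      ∀ y, (¬ ∃ k : ℤ, y = (c ^ k) x) → (¬ ∃ k : ℤ, y = (c ^ k) (a x)) → φ y = y := by
    refine ⟨fun y => if h : ∃ k : ℤ, y = (c ^ k) x then (c ^ h.choose) (a x) else
      if h : ∃ k : ℤ, y = (c ^ k) (a x) then (c ^ h.choose) x else y, ?_, ?_, ?_⟩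
    · intro k
      have h : ∃ j : ℤ, (c ^ k) x = (c ^ j) x := ⟨k, rfl⟩
      simp only [dif_pos h]
      exact (hw1 _ _ _ h.choose_spec).symm
    · intro k
      have h0 : ¬ ∃ j : ℤ, (c ^ k) (a x) = (c ^ j) x := fun ⟨j, hj⟩ => hdisj _ _ hj.symm
      have h : ∃ j : ℤ, (c ^ k) (a x) = (c ^ j) (a x) := ⟨k, rfl⟩
      simp only [dif_neg h0, dif_pos h]
      have := hw1 _ _ _ h.choose_spec
      rw [ha] at this
      exact this.symm
    · intro y h1 h2
      simp only [dif_neg h1, dif_neg h2]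
  have hcol : ∀ k : ℤ, col ((c ^ k) x) = col ((c ^ k) (a x)) := by
    have h1 : ∀ y, col (c y) = !col y := fun y => by rw [hcy, hcb, hca]
    have h2 : ∀ y, col (c⁻¹ y) = !col y := fun y => by rw [hcinv, hca, hcb]
    intro k
    induction k using Int.induction_on with
    | zero => simp [hca]
    | succ i ih =>
      rw [add_comm, hadd, hadd, zpow_one, h1, h1, ih]
    | pred i ih =>
      rw [sub_eq_add_neg, add_comm, hadd, hadd, zpow_neg_one, h2, h2, ih]
  -- every point lies in one of the two rotation orbits or outside of both
  have hcases : ∀ y, (∃ k : ℤ, y = (c ^ k) x) ∨ (∃ k : ℤ, y = (c ^ k) (a x)) ∨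
      ((¬ ∃ k : ℤ, y = (c ^ k) x) ∧ (¬ ∃ k : ℤ, y = (c ^ k) (a x))) := by
    intro y; tauto
  refine ⟨φ, ?_, ?_, ?_, ?_, ?_⟩
  · intro y
    rcases hcases y with ⟨k, rfl⟩ | ⟨k, rfl⟩ | ⟨h1, h2⟩
    · rw [hφ1, hφ2]
    · rw [hφ2, hφ1]
    · rw [hφ3 y h1 h2, hφ3 y h1 h2]
  · intro y
    rcases hcases y with ⟨k, rfl⟩ | ⟨k, rfl⟩ | ⟨h1, h2⟩
    · rw [hφ1, hac, hφ2, hac, ha]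
    · rw [hφ2, hac, hac, ha, hφ1]
    · rw [hφ3 y h1 h2, hφ3]
      · rintro ⟨k, hk⟩
        exact h2 ⟨-k, by rw [← hac, ← hk, ha]⟩
      · rintro ⟨k, hk⟩
        exact h1 ⟨-k, by rw [← ha y, hk, hac, ha]⟩
  · intro y
    rcases hcases y with ⟨k, rfl⟩ | ⟨k, rfl⟩ | ⟨h1, h2⟩
    · rw [hφ1, hbc, hbc, hbx, hbx, ← hadd, hφ2, ← hadd, ha]
    · rw [hφ2, hbc, hbc, hbx, hbx, ← hadd, ← hadd, ha, hφ1]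
    · rw [hφ3 y h1 h2, hφ3]
      · rintro ⟨k, hk⟩
        refine h2 ⟨-k + 1, ?_⟩
        rw [hadd, ← hbx, ← hbc, ← hk, hb]
      · rintro ⟨k, hk⟩
        refine h1 ⟨-k + 1, ?_⟩
        rw [← hb y, hk, hbc, hbx, ha, ← hadd]
  · simpa using hφ1 0
  · intro y
    rcases hcases y with ⟨k, rfl⟩ | ⟨k, rfl⟩ | ⟨h1, h2⟩
    · rw [hφ1, hcol]
    · rw [hφ2, hcol]
    · rw [hφ3 y h1 h2]

/-- The number of neighbours of `p` inside `S`, for a relation `adj`. -/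
noncomputable def degIn {P : Type*} (adj : P → P → Prop) (S : Finset P) (p : P) : ℕ :=
  (S.filter (adj p)).card

/-- `f` is an involution supported on `S` that preserves the colouring `col` and the relation `adj`
inside `S`. As `f` is an involution, the implication in the third clause is an equivalence. -/
def IsSymmOn {P : Type*} (adj : P → P → Prop) (col : P → Bool) (S : Finset P)
    (f : P → P) : Prop :=
  Function.Involutive f ∧ (∀ p, p ∉ S → f p = p) ∧
    (∀ p ∈ S, ∀ q ∈ S, adj p q → adj (f p) (f q)) ∧ ∀ p, col (f p) = col p

/-- A properly 2-coloured graph that is 2-regular on `S` has a reflection about any node `w` of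
`S`. The dihedral group acts on the darts of the graph, generated by the turn of a dart about its
initial node and the reversal of darts. -/
theorem exists_reflection {P : Type*} (adj : P → P → Prop) (col : P → Bool)
    (hsymm : ∀ p q, adj p q → adj q p) (hcol : ∀ p q, adj p q → col q = !col p)
    (S : Finset P) (hdeg : ∀ p ∈ S, degIn adj S p = 2) (w : P) (hw : w ∈ S) :
    ∃ f, IsSymmOn adj col S f ∧ f w = w ∧ ∀ q ∈ S, adj w q → f q ≠ q := by
  have key : ∀ p ∈ S, ∀ q ∈ S, ∀ q' ∈ S, ∀ q'' ∈ S, adj p q → adj p q' → adj p q'' →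
      q ≠ q' → q'' ≠ q' → q'' = q := by
    intro p hp q hq q' hq' q'' hq'' h h' h'' hne hne'
    by_contra hcon
    have hsub : ({q, q', q''} : Finset P) ⊆ S.filter (adj p) := by
      intro z hz
      simp only [Finset.mem_insert, Finset.mem_singleton] at hz
      rcases hz with rfl | rfl | rfl <;> simp [*]
    have h3 : ({q, q', q''} : Finset P).card = 3 :=
      Finset.card_eq_three.2 ⟨q, q', q'', hne, fun h => hcon h.symm, fun h => hne' h.symm, rfl⟩
    have := Finset.card_le_card hsub
    have h2 := hdeg p hp
    unfold degIn at h2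
    omega
  let F := {z : P × P // z.1 ∈ S ∧ z.2 ∈ S ∧ adj z.1 z.2}
  have hF : ∀ p ∈ S, ∃ z : F, z.1.1 = p := by
    intro p hp
    have h2 := hdeg p hp
    unfold degIn at h2
    obtain ⟨q, hq⟩ := Finset.card_pos.1 (by omega : 0 < (S.filter (adj p)).card)
    rw [Finset.mem_filter] at hq
    exact ⟨⟨(p, q), hp, hq.1, hq.2⟩, rfl⟩
  have hnext : ∀ z : F, ∃ z' : F, z'.1.1 = z.1.1 ∧ z'.1.2 ≠ z.1.2 := by
    rintro ⟨⟨p, q⟩, hp, hq, h⟩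
    have h2 := hdeg p hp
    unfold degIn at h2
    obtain ⟨q', hq', hne⟩ := Finset.exists_mem_ne (by omega : 1 < (S.filter (adj p)).card) q
    rw [Finset.mem_filter] at hq'
    exact ⟨⟨(p, q'), hp, hq'.1, hq'.2⟩, rfl, hne⟩
  choose n hn1 hn2 using hnext
  have hother : ∀ z z' : F, z'.1.1 = z.1.1 → z' = z ∨ z' = n z := by
    intro z z' h
    by_cases h2 : z'.1.2 = z.1.2
    · left
      exact Subtype.ext (Prod.ext h h2)
    · right
      apply Subtype.ext
      refine Prod.ext (h.trans (hn1 z).symm) ?_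
      refine key z.1.1 z.2.1 _ (n z).2.2.1 z.1.2 z.2.2.1 _ z'.2.2.1 ?_ z.2.2.2 ?_ (hn2 z) h2
      · have := (n z).2.2.2
        rwa [hn1] at this
      · have := z'.2.2.2
        rwa [h] at this
  have hnn : ∀ z, n (n z) = z := by
    intro z
    rcases hother z (n (n z)) (by rw [hn1, hn1]) with h | h
    · exact h
    · exact absurd (congrArg (fun z : F => z.1.2) h) (hn2 (n z))
  let a : Equiv.Perm F := Function.Involutive.toPerm n hnn
  let r : F → F := fun z => ⟨(z.1.2, z.1.1), z.2.2.1, z.2.1, hsymm _ _ z.2.2.2⟩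
  let b : Equiv.Perm F := Function.Involutive.toPerm r (fun z => rfl)
  have hirr : ∀ p, ¬ adj p p := by
    intro p h
    have := hcol p p h
    cases hc : col p <;> simp [hc] at this
  obtain ⟨x, hx⟩ := hF w hw
  obtain ⟨φ, hinv, hφa, hφb, hφx, hφc⟩ := exists_dihedral_reflection a b hnn (fun z => rfl)
    (fun z h => hn2 z (congrArg (fun z : F => z.1.2) h))
    (fun z h => hirr z.1.1 (by
      have h1 : z.1.2 = z.1.1 := congrArg (fun z : F => z.1.1) h
      have := z.2.2.2
      rwa [h1] at this)) x (fun z => col z.1.1)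
    (fun z => congrArg col (hn1 z)) (fun z => hcol _ _ z.2.2.2)
  choose D hD using hF
  let f : P → P := fun p => if h : p ∈ S then (φ (D p h)).1.1 else p
  have hf1 : ∀ z : F, f z.1.1 = (φ z).1.1 := by
    intro z
    simp only [f, dif_pos z.2.1]
    rcases hother z (D z.1.1 z.2.1) (hD _ _) with h | h
    · rw [h]
    · rw [h, show n z = a z from rfl, hφa]
      exact hn1 _
  have hf2 : ∀ z : F, f z.1.2 = (φ z).1.2 := by
    intro z
    have := hf1 (b z)
    rw [hφb] at this
    exact this
  refine ⟨f, ⟨?_, ?_, ?_, ?_⟩, ?_, ?_⟩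
  · intro p
    by_cases h : p ∈ S
    · have h1 := hf1 (D p h)
      rw [hD] at h1
      rw [h1, hf1, hinv, hD]
    · simp [f, h]
  · intro p h
    simp [f, h]
  · intro p hp q hq h
    have h1 := hf1 ⟨(p, q), hp, hq, h⟩
    have h2 := hf2 ⟨(p, q), hp, hq, h⟩
    simp only at h1 h2
    rw [h1, h2]
    exact (φ _).2.2.2
  · intro p
    by_cases h : p ∈ S
    · have h1 := hf1 (D p h)
      rw [hD] at h1
      rw [h1, hφc, hD]
    · simp [f, h]
  · rw [← hx, hf1, hφx]
    exact hn1 x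
  · intro q hq h
    subst hx
    obtain ⟨z, hz⟩ : ∃ z : F, z = ⟨(x.1.1, q), hw, hq, h⟩ := ⟨_, rfl⟩
    have hq : q = z.1.2 := by rw [hz]
    rw [hq, hf2]
    have : φ z = a z := by
      rcases hother x z (by rw [hz]) with h | h
      · rw [h, hφx]
      · rw [h, show n x = a x from rfl, hφa, hφx]
    rw [this]
    exact hn2 z

/-- A properly 2-coloured graph on `S` all of whose nodes have degree 2, except for one node `w` of
degree 3 and one node `l` of degree 1, has a nontrivial symmetry fixing `l`. Deleting `l` leaves
a smaller graph of the same kind, or, if `l` is adjacent to `w`, a 2-regular graph. -/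
theorem exists_symm_of_tadpole {P : Type*} (adj : P → P → Prop) (col : P → Bool)
    (hsymm : ∀ p q, adj p q → adj q p) (hcol : ∀ p q, adj p q → col q = !col p) (w : P)
    (S : Finset P) (l : P) (hw : w ∈ S) (hl : l ∈ S) (hdw : degIn adj S w = 3)
    (hdl : degIn adj S l = 1) (hdeg : ∀ p ∈ S, p ≠ w → p ≠ l → degIn adj S p = 2) :
    ∃ f, IsSymmOn adj col S f ∧ f l = l ∧ ∃ p, f p ≠ p := by
  induction hk : S.card generalizing S l with
  | zero => simp_all
  | succ k ih =>
  have hwl : w ≠ l := by rintro rfl; omega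
  obtain ⟨u, hu⟩ := Finset.card_eq_one.1 hdl
  have hu' : ∀ q, (q ∈ S ∧ adj l q) ↔ q = u := fun q => by
    rw [← Finset.mem_filter, hu, Finset.mem_singleton]
  obtain ⟨huS, hlu⟩ := (hu' u).2 rfl
  have hul : u ≠ l := by
    rintro rfl
    have := hcol u u hlu
    cases hc : col u <;> simp [hc] at this
  have hdel : ∀ p, degIn adj (S.erase l) p =
      ((S.filter (adj p)).erase l).card := by
    intro p
    unfold degIn
    rw [Finset.filter_erase]
  have hdelu : degIn adj (S.erase l) u = degIn adj S u - 1 := by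
    rw [hdel, Finset.card_erase_of_mem]
    · rfl
    · simp [hl, hsymm _ _ hlu]
  have hdel' : ∀ p ∈ S, p ≠ u → degIn adj (S.erase l) p = degIn adj S p := by
    intro p hp hpu
    rw [hdel, Finset.erase_eq_of_notMem]
    · rfl
    · intro h
      rw [Finset.mem_filter] at h
      exact hpu ((hu' p).1 ⟨hp, hsymm _ _ h.2⟩)
  -- a symmetry of the graph without `l` that fixes the neighbour of `l` extends
  have hext : ∀ f, IsSymmOn adj col (S.erase l) f → f u = u → IsSymmOn adj col S f ∧ f l = l := by
    rintro f ⟨h1, h2, h3, h4⟩ hfu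
    have hfl : f l = l := h2 l (by simp)
    refine ⟨⟨h1, fun p hp => h2 p (fun h => hp (Finset.mem_of_mem_erase h)), ?_, h4⟩, hfl⟩
    intro p hp q hq h
    by_cases hpl : p = l
    · subst hpl
      obtain rfl := (hu' q).1 ⟨hq, h⟩
      rwa [hfl, hfu]
    by_cases hql : q = l
    · subst hql
      obtain rfl := (hu' p).1 ⟨hp, hsymm _ _ h⟩
      rwa [hfl, hfu]
    exact h3 p (by simp [*]) q (by simp [*]) h
  by_cases huw : u = w
  · subst huw
    have hreg : ∀ p ∈ S.erase l, degIn adj (S.erase l) p = 2 := by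
      intro p hp
      rw [Finset.mem_erase] at hp
      by_cases hpu : p = u
      · rw [hpu, hdelu, hdw]
      · rw [hdel' p hp.2 hpu, hdeg p hp.2 hpu hp.1]
    obtain ⟨f, hf, hfu, hfq⟩ := exists_reflection adj col hsymm hcol (S.erase l) hreg u
      (by simp [*])
    obtain ⟨hf', hfl⟩ := hext f hf hfu
    have h2 := hreg u (by simp [*])
    unfold degIn at h2
    obtain ⟨q, hq⟩ := Finset.card_pos.1 (by omega : 0 < ((S.erase l).filter (adj u)).card)
    rw [Finset.mem_filter] at hq
    exact ⟨f, hf', hfl, q, hfq q hq.1 hq.2⟩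
  · obtain ⟨f, hf, hfu, hne⟩ := ih (S.erase l) u (by simp [*]) (by simp [*])
      (by rw [hdel' w hw (Ne.symm huw), hdw])
      (by rw [hdelu, hdeg u huS huw hul])
      (by
        intro p hp hpw hpu
        rw [Finset.mem_erase] at hp
        rw [hdel' p hp.2 hpu, hdeg p hp.2 hpw hp.1])
      (by rw [Finset.card_erase_of_mem hl]; omega)
    obtain ⟨hf', hfl⟩ := hext f hf hfu
    exact ⟨f, hf', hfl, hne⟩

/-! ### Core automorphisms and their extensions -/

/-- The degree of a vertex: the number of edges containing it. -/
def hypDeg {N : ℕ} (E : Finset (Finset (Fin N))) (v : Fin N) : ℕ :=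
  (E.filter (v ∈ ·)).card

/-- The core vertices: those lying in at least two edges. -/
abbrev Core {N : ℕ} (E : Finset (Finset (Fin N))) : Type := {v : Fin N // 2 ≤ hypDeg E v}

/-- The vertices of the edge `e` lying in no other edge (when all degrees are positive). -/
abbrev Priv {N : ℕ} (E : Finset (Finset (Fin N))) (e : E) : Type :=
  {v : Fin N // v ∈ e.1 ∧ ¬ 2 ≤ hypDeg E v}

/-- The automorphisms of the incidence structure formed by the core vertices and the edges. -/
def coreAut {N : ℕ} (E : Finset (Finset (Fin N))) :
    Subgroup (Equiv.Perm (Core E) × Equiv.Perm E) where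
  carrier := {p | ∀ (v : Core E) (e : E), v.1 ∈ e.1 ↔ (p.1 v).1 ∈ (p.2 e).1}
  mul_mem' := by
    intro p q hp hq v e
    exact (hq v e).trans (hp _ _)
  one_mem' := by
    intro v e
    rfl
  inv_mem' := by
    intro p hp v e
    have := hp (p.1⁻¹ v) (p.2⁻¹ e)
    simpa using this.symm

theorem eq_of_mem_of_not_core {N : ℕ} {E : Finset (Finset (Fin N))} {v : Fin N}
    (hv : ¬ 2 ≤ hypDeg E v) {e e' : E} (h : v ∈ e.1) (h' : v ∈ e'.1) : e = e' := by
  unfold hypDeg at hv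
  exact Subtype.ext (Finset.card_le_one.1 (by omega : (E.filter (v ∈ ·)).card ≤ 1) e.1
    (by simp [h]) e'.1 (by simp [h']))

/-- A permutation of the core vertices and a permutation of the edges, together with bijections
between the private vertices of each edge and of its image, glue to a vertex permutation. -/
theorem exists_glue {N : ℕ} (E : Finset (Finset (Fin N))) (hpos : ∀ v, 1 ≤ hypDeg E v)
    (α : Equiv.Perm (Core E)) (β : Equiv.Perm E) (τ : ∀ e : E, Priv E e ≃ Priv E (β e)) :
    ∃ σ : Equiv.Perm (Fin N), (∀ c : Core E, σ c.1 = (α c).1) ∧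
      ∀ (e : E) (v : Priv E e), σ v.1 = (τ e v).1 := by
  let g : Core E ⊕ (Σ e : E, Priv E e) → Fin N := Sum.elim (fun c => c.1) (fun s => s.2.1)
  have hg : Function.Bijective g := by
    constructor
    · rintro (c | ⟨e, v⟩) (c' | ⟨e', v'⟩) h
      · exact congrArg Sum.inl (Subtype.ext h)
      · have h : c.1 = v'.1 := h
        exact absurd (h ▸ c.2) v'.2.2
      · have h : v.1 = c'.1 := h
        exact absurd (h ▸ c'.2) v.2.2
      · have h : v.1 = v'.1 := h
        obtain rfl : e = e' := eq_of_mem_of_not_core v.2.2 v.2.1 (h ▸ v'.2.1)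
        obtain rfl : v = v' := Subtype.ext h
        rfl
    · intro v
      by_cases hv : 2 ≤ hypDeg E v
      · exact ⟨Sum.inl ⟨v, hv⟩, rfl⟩
      · obtain ⟨e, he⟩ := Finset.card_pos.1 (hpos v)
        rw [Finset.mem_filter] at he
        exact ⟨Sum.inr ⟨⟨e, he.1⟩, ⟨v, he.2, hv⟩⟩, rfl⟩
  let q := Equiv.ofBijective g hg
  refine ⟨q.symm.trans ((Equiv.sumCongr α (Equiv.sigmaCongr β τ)).trans q), ?_, ?_⟩
  · intro c
    have : q.symm c.1 = Sum.inl c := by rw [Equiv.symm_apply_eq]; rfl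
    simp only [Equiv.trans_apply, this]
    rfl
  · intro e v
    have : q.symm v.1 = Sum.inr ⟨e, v⟩ := by rw [Equiv.symm_apply_eq]; rfl
    simp only [Equiv.trans_apply, this]
    rfl

/-- The number of core vertices in an edge. -/
def coreCard {N : ℕ} (E : Finset (Finset (Fin N))) (e : Finset (Fin N)) : ℕ :=
  (e.filter (2 ≤ hypDeg E ·)).card

theorem card_priv {N : ℕ} {E : Finset (Finset (Fin N))} {d : ℕ} (hcard : ∀ e ∈ E, e.card = d)
    (e : E) : Nat.card (Priv E e) + coreCard E e.1 = d := by
  rw [← hcard e.1 e.2, ← Finset.card_filter_add_card_filter_not (s := e.1) (2 ≤ hypDeg E ·),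
    add_comm]
  congr 1
  rw [Nat.card_eq_fintype_card, Fintype.card_subtype]
  congr 1
  ext v
  simp

theorem coreCard_eq_natCard {N : ℕ} (E : Finset (Finset (Fin N))) (e : Finset (Fin N)) :
    coreCard E e = Nat.card {v : Core E // v.1 ∈ e} := by
  rw [Nat.card_congr (Equiv.subtypeSubtypeEquivSubtypeInter (2 ≤ hypDeg E ·) (· ∈ e)),
    Nat.card_eq_fintype_card, Fintype.card_subtype]
  unfold coreCard
  congr 1
  ext v
  simp [and_comm]

/-- Every core automorphism extends to `H`, and the extensions differ by permutations of the
private vertices of each edge. -/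
theorem card_coreAut_mul_le {N : ℕ} (E : Finset (Finset (Fin N))) {d : ℕ}
    (hcard : ∀ e ∈ E, e.card = d) (hpos : ∀ v, 1 ≤ hypDeg E v) :
    Nat.card (coreAut E) * ∏ e : E, (d - coreCard E e.1).factorial ≤
      Nat.card {σ : Equiv.Perm (Fin N) // ∀ e : Finset (Fin N), e ∈ E ↔ e.image σ ∈ E} := by
  have hsame : ∀ (p : coreAut E) (e : E),
      Nat.card (Priv E e) = Nat.card (Priv E (p.1.2 e)) := by
    intro p e
    have h1 := card_priv hcard e
    have h2 := card_priv hcard (p.1.2 e)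
    have h3 : coreCard E e.1 = coreCard E (p.1.2 e).1 := by
      rw [coreCard_eq_natCard, coreCard_eq_natCard]
      exact Nat.card_congr (p.1.1.subtypeEquiv (fun v => p.2 v e))
    omega
  have γ : ∀ (p : coreAut E) (e : E), Priv E e ≃ Priv E (p.1.2 e) :=
    fun p e => (Finite.card_eq.1 (hsame p e)).some
  have hlift := fun x : coreAut E × (∀ e : E, Equiv.Perm (Priv E e)) =>
    exists_glue E hpos x.1.1.1 x.1.1.2 (fun e => (x.2 e).trans (γ x.1 e))
  choose σ hσ1 hσ2 using hlift
  have himg : ∀ x (e : E), e.1.image (σ x) = (x.1.1.2 e).1 := by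
    intro x e
    apply Finset.eq_of_subset_of_card_le
    · intro y hy
      obtain ⟨v, hv, rfl⟩ := Finset.mem_image.1 hy
      by_cases hc : 2 ≤ hypDeg E v
      · rw [hσ1 x ⟨v, hc⟩]
        exact (x.1.2 ⟨v, hc⟩ e).1 hv
      · rw [hσ2 x e ⟨v, hv, hc⟩]
        exact (((x.2 e).trans (γ x.1 e)) ⟨v, hv, hc⟩).2.1
    · rw [Finset.card_image_of_injective _ (σ x).injective, hcard _ e.2, hcard _ (x.1.1.2 e).2]
  have hmem : ∀ x (e : Finset (Fin N)), e ∈ E ↔ e.image (σ x) ∈ E := by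
    intro x e
    constructor
    · intro he
      rw [himg x ⟨e, he⟩]
      exact (x.1.1.2 ⟨e, he⟩).2
    · intro he
      have h := himg x (x.1.1.2⁻¹ ⟨_, he⟩)
      rw [show x.1.1.2 (x.1.1.2⁻¹ ⟨_, he⟩) = ⟨_, he⟩ from x.1.1.2.apply_symm_apply _] at h
      rw [← Finset.image_injective (σ x).injective h]
      exact (x.1.1.2⁻¹ ⟨_, he⟩).2
  have hinj : Function.Injective (fun x => (⟨σ x, hmem x⟩ :
      {σ : Equiv.Perm (Fin N) // ∀ e : Finset (Fin N), e ∈ E ↔ e.image σ ∈ E})) := by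
    intro x y hxy
    have h : σ x = σ y := congrArg Subtype.val hxy
    have hp : x.1 = y.1 := by
      apply Subtype.ext
      apply Prod.ext
      · ext1 c
        apply Subtype.ext
        rw [← hσ1, ← hσ1, h]
      · ext1 e
        apply Subtype.ext
        rw [← himg, ← himg, h]
    obtain ⟨p, π⟩ := x
    obtain ⟨p', π'⟩ := y
    obtain rfl : p = p' := hp
    congr 1
    funext e
    ext1 v
    apply (γ p e).injective
    apply Subtype.ext
    have h1 := hσ2 (p, π) e v
    have h2 := hσ2 (p, π') e v
    rw [h] at h1
    exact h1.symm.trans h2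
  have hle := Nat.card_le_card_of_injective _ hinj
  rw [Nat.card_prod, Nat.card_pi] at hle
  refine le_trans (le_of_eq ?_) hle
  congr 1
  apply Finset.prod_congr rfl
  intro e _
  rw [Nat.card_perm]
  congr 1
  have := card_priv hcard e
  omega

/-! ### The incidence graph -/

/-- The incidence graph of core vertices and edges. -/
def incAdj {N : ℕ} (E : Finset (Finset (Fin N))) : Core E ⊕ E → Core E ⊕ E → Prop
  | Sum.inl v, Sum.inr e => v.1 ∈ e.1
  | Sum.inr e, Sum.inl v => v.1 ∈ e.1
  | _, _ => False

theorem incAdj_symm {N : ℕ} (E : Finset (Finset (Fin N))) (p q : Core E ⊕ E)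
    (h : incAdj E p q) : incAdj E q p := by
  rcases p with v | e <;> rcases q with v' | e' <;> simp_all [incAdj]

theorem incAdj_isLeft {N : ℕ} (E : Finset (Finset (Fin N))) (p q : Core E ⊕ E)
    (h : incAdj E p q) : q.isLeft = !p.isLeft := by
  rcases p with v | e <;> rcases q with v' | e' <;> simp_all [incAdj]

/-- A colour-preserving symmetry of the whole incidence graph is a core automorphism. -/
theorem exists_coreAut_of_isSymmOn {N : ℕ} (E : Finset (Finset (Fin N)))
    (f : Core E ⊕ E → Core E ⊕ E) (hf : IsSymmOn (incAdj E) Sum.isLeft Finset.univ f) :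
    ∃ g : coreAut E, (∀ v, f (Sum.inl v) = Sum.inl (g.1.1 v)) ∧
      (∀ e, f (Sum.inr e) = Sum.inr (g.1.2 e)) ∧ g * g = 1 := by
  obtain ⟨h1, -, h3, h4⟩ := hf
  have hl : ∀ v : Core E, ∃ v', f (Sum.inl v) = Sum.inl v' := by
    intro v
    have := h4 (Sum.inl v)
    exact Sum.isLeft_iff.1 this
  have hr : ∀ e : E, ∃ e', f (Sum.inr e) = Sum.inr e' := by
    intro e
    have := h4 (Sum.inr e)
    exact Sum.isRight_iff.1 (by simpa using this)
  choose α hα using hl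
  choose β hβ using hr
  have hα2 : Function.Involutive α := fun v => by
    have := h1 (Sum.inl v)
    rw [hα, hα] at this
    exact Sum.inl_injective this
  have hβ2 : Function.Involutive β := fun e => by
    have := h1 (Sum.inr e)
    rw [hβ, hβ] at this
    exact Sum.inr_injective this
  have hinc : ∀ v e, v.1 ∈ e.1 → (α v).1 ∈ (β e).1 := by
    intro v e h
    have := h3 (Sum.inl v) (Finset.mem_univ _) (Sum.inr e) (Finset.mem_univ _) h
    rw [hα, hβ] at this
    exact this
  refine ⟨⟨(hα2.toPerm, hβ2.toPerm), fun v e => ⟨hinc v e, fun h => ?_⟩⟩, hα, hβ, ?_⟩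
  · have := hinc _ _ h
    rwa [hα2.coe_toPerm, hβ2.coe_toPerm, hα2, hβ2] at this
  · apply Subtype.ext
    apply Prod.ext
    · ext1 v
      exact hα2 v
    · ext1 e
      exact hβ2 e

theorem four_le_card {G : Type*} [Group G] [Finite G] (g h : G) (hg : g ≠ 1) (hh : h ≠ 1)
    (hgh : g ≠ h) (hgg : g * g = 1) : 4 ≤ Nat.card G := by
  have : Fintype G := Fintype.ofFinite G
  have h4 : ({1, g, h, g * h} : Finset G).card = 4 := by
    have h1 : g * h ≠ 1 := fun h1 => hgh (mul_left_cancel (hgg.trans h1.symm))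
    rw [Finset.card_insert_of_notMem, Finset.card_insert_of_notMem,
      Finset.card_insert_of_notMem, Finset.card_singleton]
    · simpa using hg
    · simp [hgh, hh]
    · simp [hg.symm, hh.symm, h1.symm]
  rw [Nat.card_eq_fintype_card, ← h4]
  exact Finset.card_le_univ _

/-- If the incidence graph is 2-regular, the reflections about an edge and about a core vertex
generate at least four core automorphisms. -/
theorem four_le_card_coreAut {N : ℕ} (E : Finset (Finset (Fin N))) (hE : E.Nonempty)
    (hdeg : ∀ p, degIn (incAdj E) Finset.univ p = 2) : 4 ≤ Nat.card (coreAut E) := by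
  obtain ⟨e0, he0⟩ := hE
  have hr := exists_reflection (incAdj E) Sum.isLeft (incAdj_symm E) (incAdj_isLeft E)
    Finset.univ (fun p _ => hdeg p)
  obtain ⟨f, hf, hfe, hfq⟩ := hr (Sum.inr ⟨e0, he0⟩) (Finset.mem_univ _)
  have h2 := hdeg (Sum.inr ⟨e0, he0⟩)
  unfold degIn at h2
  obtain ⟨q, hq⟩ := Finset.card_pos.1
    (by omega : 0 < (Finset.univ.filter (incAdj E (Sum.inr ⟨e0, he0⟩))).card)
  rw [Finset.mem_filter] at hq
  obtain ⟨f', hf', hfe', hfq'⟩ := hr q (Finset.mem_univ _)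
  obtain ⟨g, hg1, hg2, hgg⟩ := exists_coreAut_of_isSymmOn E f hf
  obtain ⟨h, hh1, hh2, -⟩ := exists_coreAut_of_isSymmOn E f' hf'
  have hfq := hfq q (Finset.mem_univ _) hq.2
  have hfq' := hfq' _ (Finset.mem_univ _) (incAdj_symm E _ _ hq.2)
  have hid : ∀ (k : Core E ⊕ E → Core E ⊕ E) (g : coreAut E),
      (∀ v, k (Sum.inl v) = Sum.inl (g.1.1 v)) → (∀ e, k (Sum.inr e) = Sum.inr (g.1.2 e)) →
      ∀ p, k p = Sum.map g.1.1 g.1.2 p := by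
    intro k g h1 h2 p
    rcases p with v | e
    · exact h1 v
    · exact h2 e
  have hg := hid f g hg1 hg2
  have hh := hid f' h hh1 hh2
  refine four_le_card g h ?_ ?_ ?_ hgg
  · rintro rfl
    exact hfq (by rw [hg]; simp)
  · rintro rfl
    exact hfq' (by rw [hh]; simp)
  · rintro rfl
    rw [hg, ← hh] at hfq
    exact hfq hfe'

/-- If the incidence graph is 2-regular up to one node of degree 3 and one of degree 1, there is a
nontrivial core automorphism. -/
theorem two_le_card_coreAut {N : ℕ} (E : Finset (Finset (Fin N))) (w l : Core E ⊕ E)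
    (hw : degIn (incAdj E) Finset.univ w = 3) (hl : degIn (incAdj E) Finset.univ l = 1)
    (hdeg : ∀ p, p ≠ w → p ≠ l → degIn (incAdj E) Finset.univ p = 2) :
    2 ≤ Nat.card (coreAut E) := by
  obtain ⟨f, hf, -, p, hp⟩ := exists_symm_of_tadpole (incAdj E) Sum.isLeft (incAdj_symm E)
    (incAdj_isLeft E) w Finset.univ l (Finset.mem_univ _) (Finset.mem_univ _) hw hl
    (fun p _ => hdeg p)
  obtain ⟨g, hg1, hg2, -⟩ := exists_coreAut_of_isSymmOn E f hf
  have : Nontrivial (coreAut E) := by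
    refine ⟨g, 1, ?_⟩
    rintro rfl
    rcases p with v | e
    · exact hp (hg1 v)
    · exact hp (hg2 e)
  exact Finite.one_lt_card

theorem degIn_inl {N : ℕ} (E : Finset (Finset (Fin N))) (v : Core E) :
    degIn (incAdj E) Finset.univ (Sum.inl v) = hypDeg E v.1 := by
  unfold degIn hypDeg
  symm
  apply Finset.card_bij (fun e he => Sum.inr ⟨e, (Finset.mem_filter.1 he).1⟩)
  · intro e he
    simpa [incAdj] using (Finset.mem_filter.1 he).2
  · intro e he e' he' h
    simpa using h
  · rintro (v' | e) h
    · simp [incAdj] at h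
    · exact ⟨e.1, by simpa [incAdj] using h, rfl⟩

theorem degIn_inr {N : ℕ} (E : Finset (Finset (Fin N))) (e : E) :
    degIn (incAdj E) Finset.univ (Sum.inr e) = coreCard E e.1 := by
  unfold degIn coreCard
  symm
  apply Finset.card_bij (fun v hv => Sum.inl ⟨v, (Finset.mem_filter.1 hv).2⟩)
  · intro v hv
    simpa [incAdj] using (Finset.mem_filter.1 hv).1
  · intro e he e' he' h
    simpa using h
  · rintro (v | e') h
    · exact ⟨v.1, by simpa [incAdj, v.2] using h, rfl⟩
    · simp [incAdj] at h

/-! ### Consequences of the unicycle condition -/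

theorem hypReach_symm {N : ℕ} {E : Finset (Finset (Fin N))} {v w : Fin N}
    (h : hypReach E v w) : hypReach E w v := by
  unfold hypReach at *
  induction h with
  | refl => exact Relation.ReflTransGen.refl
  | tail _ hab ih =>
    obtain ⟨e, he, ha, hb⟩ := hab
    exact Relation.ReflTransGen.head ⟨e, he, hb, ha⟩ ih

/-- A vertex in no edge would be a component of positive order without edges. -/
theorem hypDeg_pos {d N : ℕ} {E : Finset (Finset (Fin N))}
    (huni : componentsUnicycles d N E) (v : Fin N) : 1 ≤ hypDeg E v := by
  have hv := huni v
  have hpos : 0 < (Finset.univ.filter fun w => hypReach E v w).card :=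
    Finset.card_pos.2 ⟨v, Finset.mem_filter.2 ⟨Finset.mem_univ _, Relation.ReflTransGen.refl⟩⟩
  rw [← hv] at hpos
  obtain ⟨e, he⟩ := Finset.card_pos.1 (Nat.pos_of_mul_pos_left hpos)
  rw [Finset.mem_filter] at he
  obtain ⟨he, w, hwe, hvw⟩ := he
  refine Finset.card_pos.2 ?_
  rcases Relation.ReflTransGen.cases_head hvw with rfl | ⟨u, ⟨e', he', hve', -⟩, -⟩
  · exact ⟨e, by simp [he, hwe]⟩
  · exact ⟨e', by simp [he', hve']⟩

/-- An edge without core vertices would be a component of excess `-1`. -/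
theorem coreCard_pos {d N : ℕ} (hd : 3 ≤ d) {E : Finset (Finset (Fin N))}
    (hcard : ∀ e ∈ E, e.card = d) (huni : componentsUnicycles d N E) (e : Finset (Fin N))
    (he : e ∈ E) : 1 ≤ coreCard E e := by
  by_contra hcon
  have h0 : ∀ v ∈ e, ¬ 2 ≤ hypDeg E v := by
    intro v hv h
    apply hcon
    exact Finset.card_pos.2 ⟨v, by simp [hv, h]⟩
  have honly : ∀ v ∈ e, ∀ e' ∈ E, v ∈ e' → e' = e := by
    intro v hv e' he' hv'
    have := eq_of_mem_of_not_core (h0 v hv) (e := ⟨e', he'⟩) (e' := ⟨e, he⟩) hv' hv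
    exact congrArg Subtype.val this
  obtain ⟨v, hv⟩ := Finset.card_pos.1 (by rw [hcard e he]; omega : 0 < e.card)
  have hreach : ∀ w, hypReach E v w ↔ w ∈ e := by
    intro w
    constructor
    · intro h
      induction h with
      | refl => exact hv
      | tail _ hab ih =>
        obtain ⟨e', he', ha, hb⟩ := hab
        rwa [← honly _ ih e' he' ha]
    · intro hw
      exact Relation.ReflTransGen.single ⟨e, he, hv, hw⟩
  have h1 : (Finset.univ.filter fun w => hypReach E v w) = e := by
    ext w; simp [hreach]
  have h2 : (E.filter fun e' => ∃ w ∈ e', hypReach E v w) = {e} := by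
    ext e'
    simp only [Finset.mem_filter, Finset.mem_singleton, hreach]
    constructor
    · rintro ⟨he', w, hw, hwe⟩
      exact honly w hwe e' he' hw
    · rintro rfl
      exact ⟨he, v, hv, hv⟩
  have := huni v
  rw [h1, h2, hcard e he, Finset.card_singleton] at this
  omega

/-- The total excess is 0. -/
theorem mul_card_edges {d N : ℕ} (hd : 3 ≤ d) (hN : 0 < N) {E : Finset (Finset (Fin N))}
    (hcard : ∀ e ∈ E, e.card = d) (huni : componentsUnicycles d N E) :
    (d - 1) * E.card = N := by
  have : Nonempty (Fin N) := ⟨⟨0, hN⟩⟩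
  let s : Setoid (Fin N) :=
    ⟨hypReach E, fun _ => Relation.ReflTransGen.refl, hypReach_symm, Relation.ReflTransGen.trans⟩
  have hne : ∀ e ∈ E, ∃ w, w ∈ e := fun e he =>
    Finset.card_pos.1 (by rw [hcard e he]; omega : 0 < e.card)
  choose! r hr using hne
  have h1 := Finset.card_eq_sum_card_fiberwise (s := (Finset.univ : Finset (Fin N)))
    (t := (Finset.univ : Finset (Quotient s))) (f := fun v => Quotient.mk s v)
    (fun _ _ => Finset.mem_coe.2 (Finset.mem_univ _))
  have h2 := Finset.card_eq_sum_card_fiberwise (s := E)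
    (t := (Finset.univ : Finset (Quotient s))) (f := fun e => Quotient.mk s (r e))
    (fun _ _ => Finset.mem_coe.2 (Finset.mem_univ _))
  rw [Finset.card_univ, Fintype.card_fin] at h1
  refine Eq.trans ?_ h1.symm
  rw [h2, Finset.mul_sum]
  apply Finset.sum_congr rfl
  intro q _
  obtain ⟨v, rfl⟩ := Quotient.exists_rep q
  have hv := huni v
  have hiff : ∀ w, Quotient.mk s w = Quotient.mk s v ↔ hypReach E v w := fun w =>
    ⟨fun h => hypReach_symm (Quotient.exact h), fun h => Quotient.sound (hypReach_symm h)⟩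
  simp only [hiff]
  rw [← hv]
  congr 2
  ext e
  simp only [Finset.mem_filter]
  refine and_congr_right fun he => ⟨fun h => ⟨r e, hr e he, h⟩, ?_⟩
  rintro ⟨w, hw, h⟩
  exact Relation.ReflTransGen.tail h ⟨e, he, hw, hr e he⟩

/-- In the incidence graph of core vertices and edges the average degree is 2. -/
theorem sum_degIn {d N : ℕ} (hd : 3 ≤ d) (hN : 0 < N) {E : Finset (Finset (Fin N))}
    (hcard : ∀ e ∈ E, e.card = d) (huni : componentsUnicycles d N E) :
    ∑ p, degIn (incAdj E) Finset.univ p = ∑ _p : Core E ⊕ E, 2 := by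
  have hNm := mul_card_edges hd hN hcard huni
  have hpos := hypDeg_pos huni
  have hdc : ∀ T : Finset (Fin N), ∑ v ∈ T, hypDeg E v = ∑ e ∈ E, (T.filter (· ∈ e)).card :=
    fun T => Finset.sum_card_bipartiteAbove_eq_sum_card_bipartiteBelow (fun v e => v ∈ e)
  have hall : ∑ v, hypDeg E v = d * E.card := by
    rw [hdc, Finset.sum_congr rfl (g := fun _ => d), Finset.sum_const, smul_eq_mul, mul_comm]
    intro e he
    rw [← hcard e he]
    congr 1
    ext v; simp
  have hcore : ∑ v with 2 ≤ hypDeg E v, hypDeg E v = ∑ e ∈ E, coreCard E e := by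
    rw [hdc]
    apply Finset.sum_congr rfl
    intro e _
    unfold coreCard
    congr 1
    ext v; simp [and_comm]
  have hnot : ∑ v with ¬ 2 ≤ hypDeg E v, hypDeg E v =
      (Finset.univ.filter fun v => ¬ 2 ≤ hypDeg E v).card := by
    rw [Finset.card_eq_sum_ones]
    apply Finset.sum_congr rfl
    intro v hv
    have := hpos v
    have := (Finset.mem_filter.1 hv).2
    omega
  have hsplit := Finset.sum_filter_add_sum_filter_not (Finset.univ : Finset (Fin N))
    (2 ≤ hypDeg E ·) (hypDeg E)
  have hsplit2 := Finset.card_filter_add_card_filter_not (s := (Finset.univ : Finset (Fin N)))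
    (2 ≤ hypDeg E ·)
  rw [Finset.card_univ, Fintype.card_fin] at hsplit2
  have hC : ∑ v : Core E, hypDeg E v.1 = ∑ v with 2 ≤ hypDeg E v, hypDeg E v :=
    (Finset.sum_subtype _ (by simp) _).symm
  have hE : ∑ e : E, coreCard E e.1 = ∑ e ∈ E, coreCard E e :=
    Finset.sum_coe_sort E (coreCard E)
  have hcC : Fintype.card (Core E) = (Finset.univ.filter fun v => 2 ≤ hypDeg E v).card :=
    Fintype.card_subtype _
  simp only [Fintype.sum_sum_type, degIn_inl, degIn_inr, Finset.sum_const, Finset.card_univ,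
    Fintype.card_sum, Fintype.card_coe, smul_eq_mul]
  rw [hC, hE, ← hcore, hcC]
  obtain ⟨k, rfl⟩ : ∃ k, d = k + 1 := ⟨d - 1, by omega⟩
  rw [Nat.add_sub_cancel] at hNm
  rw [hall, hnot, add_mul] at hsplit
  omega

/-! ### The factorial estimate and the conclusion -/

/-- Since `j!` dominates `k! * k ^ (j - k)`, a product of factorials whose arguments `k + 2 - c i`
have average at least `k` is at least the power of `k!`; every argument `k + 1` improves the bound
by the factor `(k + 1) / k`. -/
theorem factorial_pow_mul_le {ι : Type*} [Fintype ι] (k : ℕ) (hk : 1 ≤ k) (c : ι → ℕ)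
    (h1 : ∀ i, 1 ≤ c i) (h2 : ∀ i, c i ≤ k + 2) (hsum : ∑ i, c i ≤ 2 * Fintype.card ι) :
    k.factorial ^ Fintype.card ι * (k + 1) ^ (Finset.univ.filter (c · = 1)).card ≤
      (∏ i, (k + 2 - c i).factorial) * k ^ (Finset.univ.filter (c · = 1)).card := by
  have hi : ∀ i, k.factorial * k ^ 2 * (if c i = 1 then k + 1 else 1) ≤
      (k + 2 - c i).factorial * k ^ c i * (if c i = 1 then k else 1) := by
    intro i
    split_ifs with h
    · rw [h, show k + 2 - 1 = k + 1 by omega, Nat.factorial_succ]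
      apply le_of_eq
      ring
    · obtain ⟨j, hj⟩ : ∃ j, c i = j + 2 := ⟨c i - 2, by have := h1 i; omega⟩
      have hjk : j ≤ k := by have := h2 i; omega
      rw [hj, show k + 2 - (j + 2) = k - j by omega, mul_one, mul_one, pow_add, ← mul_assoc,
        ← Nat.factorial_mul_descFactorial hjk]
      gcongr
      exact Nat.descFactorial_le_pow k j
  have hprod := Finset.prod_le_prod' (s := (Finset.univ : Finset ι)) (fun i _ => hi i)
  simp only [Finset.prod_mul_distrib, Finset.prod_const, Finset.card_univ,
    Finset.prod_pow_eq_pow_sum, Finset.prod_ite, one_pow, mul_one] at hprod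
  have hpow : k ^ (∑ i, c i) ≤ (k ^ 2) ^ Fintype.card ι := by
    rw [← pow_mul]
    exact Nat.pow_le_pow_right hk hsum
  have hpos : 0 < (k ^ 2) ^ Fintype.card ι := by positivity
  refine Nat.le_of_mul_le_mul_left ?_ hpos
  calc _ = k.factorial ^ Fintype.card ι * (k ^ 2) ^ Fintype.card ι *
        (k + 1) ^ (Finset.univ.filter (c · = 1)).card := by ring
    _ ≤ _ := hprod
    _ ≤ (∏ i, (k + 2 - c i).factorial) * (k ^ 2) ^ Fintype.card ι *
        k ^ (Finset.univ.filter (c · = 1)).card := by gcongr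
    _ = _ := by ring

/-- Natural numbers with average 2, all of them at least 2 except for a single 1, are all equal to
2 except for this 1 and a single 3. -/
theorem exists_eq_three {P : Type*} [Fintype P] (D : P → ℕ) (l : P) (hl : D l = 1)
    (hD : ∀ p, p ≠ l → 2 ≤ D p) (hsum : ∑ p, D p = ∑ _p : P, 2) :
    ∃ w, D w = 3 ∧ ∀ p, p ≠ w → p ≠ l → D p = 2 := by
  have e1 := Finset.sum_erase_add Finset.univ D (Finset.mem_univ l)
  have e2 := Finset.sum_erase_add Finset.univ (fun _ : P => 2) (Finset.mem_univ l)
  obtain ⟨w, hw, hw3⟩ := Finset.exists_lt_of_sum_lt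
    (show ∑ p ∈ Finset.univ.erase l, 2 < ∑ p ∈ Finset.univ.erase l, D p by omega)
  have e3 := Finset.sum_erase_add _ D hw
  have e4 := Finset.sum_erase_add _ (fun _ : P => 2) hw
  have hle : ∀ p ∈ (Finset.univ.erase l).erase w, 2 ≤ D p := fun p hp =>
    hD p (Finset.ne_of_mem_erase (Finset.mem_of_mem_erase hp))
  have e5 := Finset.sum_le_sum hle
  have e6 := (Finset.sum_eq_sum_iff_of_le hle).1 (by omega)
  refine ⟨w, by omega, fun p hpw hpl => (e6 p (by simp [hpw, hpl])).symm⟩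

/-- The bound in natural numbers, with `d = k + 2`. -/
theorem factorial_pow_mul_sq_le (k : ℕ) (hk : 1 ≤ k) (N : ℕ) (hN : 0 < N)
    (E : Finset (Finset (Fin N))) (hcard : ∀ e ∈ E, e.card = k + 2)
    (huni : componentsUnicycles (k + 2) N E) :
    k.factorial ^ E.card * (k + 1) ^ 2 ≤
      Nat.card {σ : Equiv.Perm (Fin N) // ∀ e : Finset (Fin N), e ∈ E ↔ e.image σ ∈ E} *
        k ^ 2 := by
  have hd : 3 ≤ k + 2 := by omega
  have hpos := hypDeg_pos huni
  have hc1 := coreCard_pos hd hcard huni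
  have hsum := sum_degIn hd hN hcard huni
  have hE : E.Nonempty := by
    obtain ⟨e, he⟩ := Finset.card_pos.1 (hpos ⟨0, hN⟩)
    exact ⟨e, (Finset.mem_filter.1 he).1⟩
  have hsumE : ∑ e : E, coreCard E e.1 ≤ 2 * Fintype.card E := by
    simp only [Fintype.sum_sum_type, degIn_inl, degIn_inr] at hsum
    have h : ∑ _v : Core E, 2 ≤ ∑ v : Core E, hypDeg E v.1 := Finset.sum_le_sum fun v _ => v.2
    have h' : ∑ _e : E, 2 = 2 * Fintype.card E := by
      rw [Finset.sum_const, Finset.card_univ, smul_eq_mul, mul_comm]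
    omega
  have hfac := factorial_pow_mul_le k hk (fun e : E => coreCard E e.1) (fun e => hc1 e.1 e.2)
    (fun e => (Finset.card_filter_le _ _).trans (hcard e.1 e.2).le) hsumE
  refine le_trans ?_ (Nat.mul_le_mul_right _ (card_coreAut_mul_le E hcard hpos))
  rw [Fintype.card_coe] at hfac
  obtain ⟨M, hM⟩ : ∃ M, M = ∏ e : E, (k + 2 - coreCard E e.1).factorial := ⟨_, rfl⟩
  rw [← hM] at hfac ⊢
  have hG : 1 ≤ Nat.card (coreAut E) := Nat.card_pos
  obtain ⟨L, hL⟩ : ∃ L, L = (Finset.univ.filter fun e : E => coreCard E e.1 = 1).card := ⟨_, rfl⟩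
  rw [← hL] at hfac
  -- the only nodes of degree less than 2 are the edges with one core vertex
  have hdeg2 : ∀ p, (∀ e : E, coreCard E e.1 = 1 → p ≠ Sum.inr e) →
      2 ≤ degIn (incAdj E) Finset.univ p := by
    rintro (v | e) h
    · rw [degIn_inl]
      exact v.2
    · rw [degIn_inr]
      have := hc1 e.1 e.2
      by_contra hcon
      exact h e (by omega) rfl
  rcases (by omega : L = 0 ∨ L = 1 ∨ 2 ≤ L) with rfl | rfl | hL2
  · have hno : ∀ e : E, coreCard E e.1 ≠ 1 := by
      intro e he
      have := Finset.card_eq_zero.1 hL.symm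
      exact Finset.notMem_empty e (this ▸ (by simpa using he))
    have hle : ∀ p ∈ Finset.univ, 2 ≤ degIn (incAdj E) Finset.univ p := fun p _ =>
      hdeg2 p fun e he => absurd he (hno e)
    have h4 := four_le_card_coreAut E hE
      (fun p => ((Finset.sum_eq_sum_iff_of_le hle).1 hsum.symm p (Finset.mem_univ _)).symm)
    simp only [pow_zero, mul_one] at hfac
    calc k.factorial ^ E.card * (k + 1) ^ 2 ≤ M * (2 * k) ^ 2 := by gcongr; omega
      _ = 4 * M * k ^ 2 := by ring
      _ ≤ _ := by gcongr
  · obtain ⟨l, hl⟩ := Finset.card_eq_one.1 hL.symm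
    have hl' : ∀ e : E, coreCard E e.1 = 1 ↔ e = l := fun e => by
      simpa using congrArg (e ∈ ·) hl
    have hdl : degIn (incAdj E) Finset.univ (Sum.inr l) = 1 := by
      rw [degIn_inr]
      exact (hl' l).2 rfl
    obtain ⟨w, hw, hrest⟩ := exists_eq_three _ (Sum.inr l) hdl
      (fun p hp => hdeg2 p fun e he => (hl' e).1 he ▸ hp) hsum
    have h2 := two_le_card_coreAut E w _ hw hdl hrest
    simp only [pow_one] at hfac
    calc k.factorial ^ E.card * (k + 1) ^ 2 = (k.factorial ^ E.card * (k + 1)) * (k + 1) := by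
          ring
      _ ≤ (M * k) * (2 * k) := by gcongr; omega
      _ = 2 * M * k ^ 2 := by ring
      _ ≤ _ := by gcongr
  · obtain ⟨j, rfl⟩ : ∃ j, L = j + 2 := ⟨L - 2, by omega⟩
    have hkj : 0 < k ^ j := by positivity
    refine le_trans (Nat.le_of_mul_le_mul_left ?_ hkj)
      (Nat.mul_le_mul_right _ (Nat.le_mul_of_pos_left M hG))
    calc k ^ j * (k.factorial ^ E.card * (k + 1) ^ 2)
        ≤ (k + 1) ^ j * (k.factorial ^ E.card * (k + 1) ^ 2) := by gcongr; omega
      _ = k.factorial ^ E.card * (k + 1) ^ (j + 2) := by ring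
      _ ≤ _ := hfac
      _ = _ := by ring

open scoped Classical in
/-- For `d ≥ 3` and a finite nonempty `d`-uniform hypergraph all of whose connected components
are unicycles, `(d-2)!^m / aut(H) ≤ ((d-2)/(d-1))²`, where `m` is the number of edges and
`aut(H)` is the number of vertex permutations mapping edges to edges. -/
theorem factorial_pow_div_aut_le (d : ℕ) (hd : 3 ≤ d) (N : ℕ) (hN : 0 < N)
    (E : Finset (Finset (Fin N))) (hcard : ∀ e ∈ E, e.card = d)
    (huni : componentsUnicycles d N E) :
    ((Nat.factorial (d - 2) : ℝ)) ^ E.card /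
        (Nat.card {σ : Equiv.Perm (Fin N) // ∀ e : Finset (Fin N), e ∈ E ↔ e.image σ ∈ E} : ℝ) ≤
      (((d : ℝ) - 2) / ((d : ℝ) - 1)) ^ 2 := by
  obtain ⟨k, rfl⟩ : ∃ k, d = k + 2 := ⟨d - 2, by omega⟩
  have hk : 1 ≤ k := by omega
  have h := factorial_pow_mul_sq_le k hk N hN E hcard huni
  have hk0 : (0 : ℝ) < k := by exact_mod_cast hk
  -- the identity is an automorphism, so the quotient is a genuine one
  have hA : 0 < Nat.card {σ : Equiv.Perm (Fin N) //
      ∀ e : Finset (Fin N), e ∈ E ↔ e.image σ ∈ E} := by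
    have : Nonempty {σ : Equiv.Perm (Fin N) //
      ∀ e : Finset (Fin N), e ∈ E ↔ e.image σ ∈ E} := ⟨⟨1, fun e => by simp⟩⟩
    exact Nat.card_pos
  have h1 : ((k + 2 : ℕ) : ℝ) - 2 = k := by push_cast; ring
  have h2 : ((k + 2 : ℕ) : ℝ) - 1 = k + 1 := by push_cast; ring
  rw [h1, h2, Nat.add_sub_cancel, div_pow, div_le_div_iff₀ (by exact_mod_cast hA) (by positivity),
    mul_comm ((k : ℝ) ^ 2)]
  exact_mod_cast h
end
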